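/- arXiv:1912.07707 — 2 statements merged into one kernel-verified Lean document; each statement's English description precedes it below -/
import Mathlib

section
/- Let d ≥ 1, 1 < p < ∞, m ∈ ℤ_{≥0} and δ ∈ ℝ. There exists a constant C > 0 such that for every g ∈ C_c^∞(ℝ^d), ‖g‖_{H^{m+2,p}_δ} ≤ C · ( ‖Δg‖_{H^{m,p}_δ} + ‖g‖_{H^{m,p}_δ} ). -/
open MeasureTheory

/-- The Japanese bracket `⟨x⟩ = √(1 + |x|²)`. -/
noncomputable def jb {d : ℕ} (x : EuclideanSpace ℝ (Fin d)) : ℝ := Real.sqrt (1 + ‖x‖ ^ 2)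

/-- Partial derivative in the `i`-th coordinate direction. -/
noncomputable def pderiv' {d : ℕ} {F : Type*} [NormedAddCommGroup F] [NormedSpace ℝ F]
    (i : Fin d) (f : EuclideanSpace ℝ (Fin d) → F) : EuclideanSpace ℝ (Fin d) → F :=
  fun x => fderiv ℝ f x (EuclideanSpace.single i 1)

/-- Multi-index derivative `∂^α f`. -/
noncomputable def mderiv {d : ℕ} {F : Type*} [NormedAddCommGroup F] [NormedSpace ℝ F]
    (α : Fin d → ℕ) (f : EuclideanSpace ℝ (Fin d) → F) : EuclideanSpace ℝ (Fin d) → F :=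
  (List.finRange d).foldr (fun i g => (pderiv' i)^[α i] g) f

/-- The Laplacian `Δf = Σ_i ∂_i ∂_i f`. -/
noncomputable def lap {d : ℕ} {F : Type*} [NormedAddCommGroup F] [NormedSpace ℝ F]
    (f : EuclideanSpace ℝ (Fin d) → F) : EuclideanSpace ℝ (Fin d) → F :=
  fun x => ∑ i : Fin d, pderiv' i (pderiv' i f) x

/-- Weighted `L^p` norm `‖⟨x⟩^δ f‖_{L^p}`. -/
noncomputable def wLp {d : ℕ} {F : Type*} [NormedAddCommGroup F] [NormedSpace ℝ F]
    (p δ : ℝ) (f : EuclideanSpace ℝ (Fin d) → F) : ℝ :=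
  (eLpNorm (fun x => jb x ^ δ • f x) (ENNReal.ofReal p) volume).toReal

/-- Weighted Sobolev norm `‖f‖_{H^{m,p}_δ} = Σ_{|α| ≤ m} ‖⟨x⟩^δ ∂^α f‖_{L^p}`. -/
noncomputable def Hnorm (d m : ℕ) {F : Type*} [NormedAddCommGroup F] [NormedSpace ℝ F]
    (p δ : ℝ) (f : EuclideanSpace ℝ (Fin d) → F) : ℝ :=
  ∑ α ∈ Finset.univ.filter (fun α : Fin d → Fin (m + 1) => ∑ i, (α i : ℕ) ≤ m),
    wLp p δ (mderiv (fun i => (α i : ℕ)) f)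

/-!
Since `∂^α` commutes with `Δ`, it is enough to bound the weighted `L^p` norms of the first and
second derivatives of a test function `g` by those of `Δg` and `g`. Put `ρ = ⟨x⟩^δ` and apply the
unweighted estimate to `ρ g`: the derivatives of `ρ` are `O(ρ)`, so by the Leibniz rule the errors
are of order at most one in `g`, and interpolation between `g` and its second derivatives absorbs
the first-order ones.

The unweighted bound on `∂_v ∂_v f` avoids singular integrals. For second differences it follows by
duality from a Bellman function: along the lazy random walk with steps `± v_k` the total Bellman
energy of a pair of functions decreases, and its decrease dominates the pairing of a second
difference of one function with the other. Letting the step size tend to zero gives the bound for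
`∂_v ∂_v f`, and polarization gives the mixed derivatives.
-/

section Bellman

theorem conjExponent_le_two {p q : ℝ} (h : p.HolderConjugate q) (hp : 2 ≤ p) : q ≤ 2 := by
  rw [h.conjugate_eq, div_le_iff₀ h.sub_one_pos]
  linarith

theorem sq_weighted_sum_le {r s ξ η : ℝ} (hr : 0 ≤ r) (hs : 0 ≤ s) (hrs : r + s = 1) :
    (r * ξ + s * η) ^ 2 ≤ r * ξ ^ 2 + s * η ^ 2 := by
  simpa using (Even.convexOn_pow even_two (𝕜 := ℝ)).2 (Set.mem_univ ξ) (Set.mem_univ η) hr hs hrs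

theorem two_div_mul_sq_weighted_sum_le {p q r s x y : ℝ} (h : p.HolderConjugate q) (hr : 0 ≤ r)
    (hs : 0 ≤ s) (hrs : r + s = 1) : 2 / p * (p * r * x + q * s * y) ^ 2
      ≤ 2 * p * r * x ^ 2 + 2 * (q * (q - 1)) * s * y ^ 2 := by
  have hp := h.pos
  have hp1 := h.sub_one_ne_zero
  have hq : 2 / p * q ^ 2 = 2 * (q * (q - 1)) := by
    rw [h.conjugate_eq]
    field_simp
    ring
  calc 2 / p * (p * r * x + q * s * y) ^ 2 = 2 / p * (r * (p * x) + s * (q * y)) ^ 2 := by ring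
    _ ≤ 2 / p * (r * (p * x) ^ 2 + s * (q * y) ^ 2) := by
      gcongr
      exact sq_weighted_sum_le hr hs hrs
    _ = (2 / p * p) * p * r * x ^ 2 + (2 / p * q ^ 2) * s * y ^ 2 := by ring
    _ = _ := by rw [hq, div_mul_cancel₀ _ hp.ne']

theorem two_mul_mul_le_of_sq_le_mul {A B τ x y : ℝ} (hA : 0 ≤ A) (hB : 0 ≤ B)
    (hτ : τ ^ 2 ≤ A * B) : 2 * |τ * (x * y)| ≤ A * x ^ 2 + B * y ^ 2 := by
  refine abs_le_of_sq_le_sq' ?_ (by positivity) |>.2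
  calc (2 * |τ * (x * y)|) ^ 2 = 4 * τ ^ 2 * (x ^ 2 * y ^ 2) := by rw [mul_pow, sq_abs]; ring
    _ ≤ 4 * (A * B) * (x ^ 2 * y ^ 2) := by gcongr
    _ ≤ (A * x ^ 2 + B * y ^ 2) ^ 2 := by nlinarith [sq_nonneg (A * x ^ 2 - B * y ^ 2)]

/-- The Hessian of `u² (uᵖ + v^q) ^ a`, with `a = 1 - 2 / p`, in the direction `(u x, v y)`, divided
by `u² (uᵖ + v^q) ^ a`. Here `r` and `s` are the shares of `uᵖ` and `v^q` in `uᵖ + v^q`. -/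
noncomputable def bellmanHessian (p q r s x y : ℝ) : ℝ :=
  2 * x ^ 2 + 4 * (1 - 2 / p) * x * (p * r * x + q * s * y)
    + (1 - 2 / p) * (p * (p - 1) * r * x ^ 2 + q * (q - 1) * s * y ^ 2)
    - (1 - 2 / p) * (2 / p) * (p * r * x + q * s * y) ^ 2

theorem le_bellmanHessian {p q r s x y : ℝ} (h : p.HolderConjugate q) (hp : 2 ≤ p) (hr : 0 ≤ r)
    (hs : 0 ≤ s) (hrs : r + s = 1) :
    2 * x ^ 2 - q * (q - 1) * s * y ^ 2 - 8 * s * |x * y| ≤ bellmanHessian p q r s x y := by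
  have hq0 := h.symm.pos
  have hq1 : 0 < q - 1 := h.symm.sub_one_pos
  have hq2 : q ≤ 2 := conjExponent_le_two h hp
  have ha0 : 0 ≤ 1 - 2 / p := by rw [sub_nonneg, div_le_one h.pos]; exact hp
  have ha1 : 1 - 2 / p ≤ 1 := sub_le_self _ (div_nonneg zero_le_two h.nonneg)
  set a := 1 - 2 / p with ha
  have cross : -(8 * s * |x * y|) ≤ 4 * (a * q) * s * (x * y) := by
    have haq : a * q ≤ 1 * 2 := by gcongr
    have : |4 * (a * q) * s * (x * y)| ≤ 8 * s * |x * y| := by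
      rw [abs_mul, abs_of_nonneg (by positivity)]
      gcongr; linarith
    linarith [neg_abs_le (4 * (a * q) * s * (x * y))]
  have main : 2 * x ^ 2 + 4 * (a * q) * s * (x * y) + a * p * (p + 1) * r * x ^ 2
      - a * (q * (q - 1)) * s * y ^ 2 ≤ bellmanHessian p q r s x y := by
    have := mul_le_mul_of_nonneg_left
      (two_div_mul_sq_weighted_sum_le h hr hs hrs (x := x) (y := y)) ha0
    rw [bellmanHessian, ← ha]
    linarith
  have hx : 0 ≤ a * p * (p + 1) * r * x ^ 2 := by have := h.pos; positivity
  have hy : a * (q * (q - 1)) * s * y ^ 2 ≤ 1 * (q * (q - 1)) * s * y ^ 2 := by gcongr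
  linarith

theorem bellmanHessian_form_nonneg {p q r s ρ τ σ x y : ℝ} (h : p.HolderConjugate q) (hp : 2 ≤ p)
    (hr : 0 ≤ r) (hs : 0 ≤ s) (hrs : r + s = 1) (hρ0 : 0 ≤ ρ) (hρ1 : ρ ≤ 1) (hτ0 : 0 ≤ τ)
    (hρτ : ρ * s ≤ τ) (hτ : τ ^ 2 ≤ ρ * s) (hσ : |σ| ≤ 1) :
    0 ≤ ρ * bellmanHessian p q r s x y + (q * (q - 1) + 13) * s * y ^ 2
      + 2 * σ * τ * (x * y) := by
  have hq0 := h.symm.pos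
  have hq1 : 0 < q - 1 := h.symm.sub_one_pos
  have hessian := mul_le_mul_of_nonneg_left (le_bellmanHessian h hp hr hs hrs (x := x) (y := y)) hρ0
  have square : ρ * (q * (q - 1) * s * y ^ 2) ≤ 1 * (q * (q - 1) * s * y ^ 2) := by gcongr
  have cross : 8 * (ρ * s) * |x * y| ≤ 8 * τ * |x * y| := by gcongr
  have twist : -(2 * τ * |x * y|) ≤ 2 * σ * τ * (x * y) := by
    have : |σ * (τ * (x * y))| ≤ 1 * (τ * |x * y|) := by
      rw [abs_mul, abs_mul τ, abs_of_nonneg hτ0]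
      gcongr
    linarith [neg_abs_le (σ * (τ * (x * y)))]
  have amgm := two_mul_mul_le_of_sq_le_mul (A := 2 * ρ) (B := 13 * s) (τ := 5 * τ) (x := x) (y := y)
    (by positivity) (by positivity) (by nlinarith)
  rw [mul_assoc 5, abs_mul 5, abs_mul τ, abs_of_nonneg hτ0, abs_of_pos (by norm_num : (0 : ℝ) < 5)]
    at amgm
  linarith

/-- The Nazarov–Treil Bellman function on the quadrant `u, v ≥ 0`, for conjugate exponents `p ≥ 2`
and `q`. -/
noncomputable def nazarovTreil (p q : ℝ) (z : ℝ × ℝ) : ℝ :=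
  z.1 ^ 2 * (z.1 ^ p + z.2 ^ q) ^ (1 - 2 / p) + (1 + 13 / (q * (q - 1))) * z.2 ^ q

theorem hasDerivAt_rpow_of_eq_mul {u : ℝ → ℝ} {t x : ℝ} (hu : HasDerivAt u (u t * x) t)
    (h0 : 0 < u t) (r : ℝ) : HasDerivAt (fun t => u t ^ r) (u t ^ r * (r * x)) t := by
  refine (hu.rpow_const (Or.inl h0.ne')).congr_deriv ?_
  rw [Real.rpow_sub_one h0.ne']
  field_simp

section Curve

variable {p q σ α β t : ℝ} {u v : ℝ → ℝ}

/-- The logarithmic derivative of `uᵖ + v^q` when `u` and `v` have the derivatives `α` and `β`. -/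
noncomputable def logDerivPowSum (p q α β : ℝ) (u v : ℝ → ℝ) (t : ℝ) : ℝ :=
  (u t ^ p * (p * (α / u t)) + v t ^ q * (q * (β / v t))) / (u t ^ p + v t ^ q)

theorem hasDerivAt_of_const_eq_mul (hu : HasDerivAt u α t) (hu0 : 0 < u t) :
    HasDerivAt u (u t * (α / u t)) t := hu.congr_deriv (by field_simp)

theorem hasDerivAt_const_div (hu : HasDerivAt u α t) (hu0 : 0 < u t) :
    HasDerivAt (fun t => α / u t) (-(α / u t) ^ 2) t :=
  ((hasDerivAt_const t α).div hu hu0.ne').congr_deriv (by field_simp; ring)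

theorem hasDerivAt_powSum (hu : HasDerivAt u α t) (hv : HasDerivAt v β t) (hu0 : 0 < u t)
    (hv0 : 0 < v t) : HasDerivAt (fun t => u t ^ p + v t ^ q)
      ((u t ^ p + v t ^ q) * logDerivPowSum p q α β u v t) t := by
  have hw : 0 < u t ^ p + v t ^ q := by positivity
  refine ((hasDerivAt_rpow_of_eq_mul (hasDerivAt_of_const_eq_mul hu hu0) hu0 p).add
    (hasDerivAt_rpow_of_eq_mul (hasDerivAt_of_const_eq_mul hv hv0) hv0 q)).congr_deriv ?_
  rw [logDerivPowSum, mul_div_cancel₀ _ hw.ne']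

theorem hasDerivAt_logDerivPowSum (hu : HasDerivAt u α t) (hv : HasDerivAt v β t) (hu0 : 0 < u t)
    (hv0 : 0 < v t) : HasDerivAt (logDerivPowSum p q α β u v)
      ((u t ^ p * (p * (p - 1) * (α / u t) ^ 2) + v t ^ q * (q * (q - 1) * (β / v t) ^ 2)) /
        (u t ^ p + v t ^ q) - logDerivPowSum p q α β u v t ^ 2) t := by
  have hw : 0 < u t ^ p + v t ^ q := by positivity
  have hu' := hasDerivAt_rpow_of_eq_mul (hasDerivAt_of_const_eq_mul hu hu0) hu0 p
  have hv' := hasDerivAt_rpow_of_eq_mul (hasDerivAt_of_const_eq_mul hv hv0) hv0 q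
  refine (((hu'.mul ((hasDerivAt_const_div hu hu0).const_mul p)).add
    (hv'.mul ((hasDerivAt_const_div hv hv0).const_mul q))).div
    (hasDerivAt_powSum hu hv hu0 hv0) hw.ne').congr_deriv ?_
  simp only [logDerivPowSum, Pi.add_apply, Pi.mul_apply]
  field_simp
  ring

theorem hasDerivAt_nazarovTreil (hu : HasDerivAt u α t) (hv : HasDerivAt v β t) (hu0 : 0 < u t)
    (hv0 : 0 < v t) : HasDerivAt (fun t => nazarovTreil p q (u t, v t) + σ * (u t * v t))
      (u t ^ 2 * (u t ^ p + v t ^ q) ^ (1 - 2 / p) *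
          (2 * (α / u t) + (1 - 2 / p) * logDerivPowSum p q α β u v t)
        + (1 + 13 / (q * (q - 1))) * (v t ^ q * (q * (β / v t)))
        + σ * (u t * v t * (α / u t + β / v t))) t := by
  have hw := hasDerivAt_rpow_of_eq_mul (hasDerivAt_powSum (p := p) (q := q) hu hv hu0 hv0)
    (by positivity) (1 - 2 / p)
  have hv' := hasDerivAt_rpow_of_eq_mul (hasDerivAt_of_const_eq_mul hv hv0) hv0 q
  refine ((((hu.pow 2).mul hw).add (hv'.const_mul _)).add ((hu.mul hv).const_mul σ)).congr_deriv ?_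
  simp only [Pi.pow_apply]
  field_simp
  ring

theorem hasDerivAt_deriv_nazarovTreil (hu : HasDerivAt u α t) (hv : HasDerivAt v β t)
    (hu0 : 0 < u t) (hv0 : 0 < v t) : HasDerivAt
      (fun t => u t ^ 2 * (u t ^ p + v t ^ q) ^ (1 - 2 / p) *
          (2 * (α / u t) + (1 - 2 / p) * logDerivPowSum p q α β u v t)
        + (1 + 13 / (q * (q - 1))) * (v t ^ q * (q * (β / v t)))
        + σ * (u t * v t * (α / u t + β / v t)))
      (u t ^ 2 * (u t ^ p + v t ^ q) ^ (1 - 2 / p) * bellmanHessian p q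
          (u t ^ p / (u t ^ p + v t ^ q)) (v t ^ q / (u t ^ p + v t ^ q)) (α / u t) (β / v t)
        + (1 + 13 / (q * (q - 1))) * (q * (q - 1)) * v t ^ q * (β / v t) ^ 2
        + 2 * σ * (u t * v t) * ((α / u t) * (β / v t))) t := by
  have hw0 : 0 < u t ^ p + v t ^ q := by positivity
  have hw := hasDerivAt_rpow_of_eq_mul (hasDerivAt_powSum (p := p) (q := q) hu hv hu0 hv0) hw0
    (1 - 2 / p)
  have hv' := hasDerivAt_rpow_of_eq_mul (hasDerivAt_of_const_eq_mul hv hv0) hv0 q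
  have hx := hasDerivAt_const_div hu hu0
  have hy := hasDerivAt_const_div hv hv0
  have hL := hasDerivAt_logDerivPowSum (p := p) (q := q) hu hv hu0 hv0
  refine (((((hu.pow 2).mul hw).mul ((hx.const_mul 2).add (hL.const_mul (1 - 2 / p)))).add
    ((hv'.mul (hy.const_mul q)).const_mul _)).add
    (((hu.mul hv).mul (hx.add hy)).const_mul σ)).congr_deriv ?_
  simp only [Pi.add_apply, Pi.mul_apply, Pi.pow_apply]
  have hα : α = u t * (α / u t) := by field_simp
  have hβ : β = v t * (β / v t) := by field_simp
  have hL' : p * (u t ^ p / (u t ^ p + v t ^ q)) * (α / u t)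
      + q * (v t ^ q / (u t ^ p + v t ^ q)) * (β / v t) = logDerivPowSum p q α β u v t := by
    rw [logDerivPowSum]; ring
  rw [bellmanHessian, hL']
  generalize logDerivPowSum p q α β u v t = l
  generalize α / u t = x at *
  generalize β / v t = y at *
  rw [hα, hβ]
  ring

end Curve

theorem sq_rpow_one_div {r : ℝ} (hr : 0 ≤ r) (p : ℝ) : (r ^ (1 / p)) ^ 2 = r ^ (2 / p) := by
  rw [← Real.rpow_natCast, ← Real.rpow_mul hr, Nat.cast_ofNat, one_div_mul_eq_div]

theorem bellmanHessian_rpow_form_nonneg {p q r s σ x y : ℝ} (h : p.HolderConjugate q) (hp : 2 ≤ p)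
    (hr : 0 ≤ r) (hs : 0 ≤ s) (hrs : r + s = 1) (hσ : |σ| ≤ 1) :
    0 ≤ r ^ (2 / p) * bellmanHessian p q r s x y + (q * (q - 1) + 13) * s * y ^ 2
      + 2 * σ * (r ^ (1 / p) * s ^ (1 / q)) * (x * y) := by
  have := h.pos
  have hq0 := h.symm.pos
  have hr1 : r ≤ 1 := by linarith
  have hs1 : s ≤ 1 := by linarith
  have hq2 : 1 ≤ 2 / q := by rw [one_le_div hq0]; exact conjExponent_le_two h hp
  refine bellmanHessian_form_nonneg h hp hr hs hrs (by positivity)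
    (Real.rpow_le_one hr hr1 (by positivity)) (by positivity) ?_ ?_ hσ
  · have hr' : r ^ (2 / p) ≤ r ^ (1 / p) :=
      Real.rpow_le_rpow_of_exponent_ge' hr hr1 (by positivity) (by gcongr; norm_num)
    have hs' : s ≤ s ^ (1 / q) :=
      Real.self_le_rpow_of_le_one hs hs1 (by rw [div_le_one hq0]; exact h.symm.lt.le)
    gcongr
  · rw [mul_pow, sq_rpow_one_div hr, sq_rpow_one_div hs]
    gcongr
    exact Real.rpow_le_self_of_le_one hs hs1 hq2

theorem nazarovTreil_second_deriv_nonneg {p q σ u v x y : ℝ} (h : p.HolderConjugate q)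
    (hp : 2 ≤ p) (hu : 0 < u) (hv : 0 < v) (hσ : |σ| ≤ 1) :
    0 ≤ u ^ 2 * (u ^ p + v ^ q) ^ (1 - 2 / p) *
        bellmanHessian p q (u ^ p / (u ^ p + v ^ q)) (v ^ q / (u ^ p + v ^ q)) x y
      + (1 + 13 / (q * (q - 1))) * (q * (q - 1)) * v ^ q * y ^ 2
      + 2 * σ * (u * v) * (x * y) := by
  have hq0 := h.symm.pos
  have hq1 : 0 < q - 1 := h.symm.sub_one_pos
  set w := u ^ p + v ^ q
  have hw0 : 0 < w := by positivity
  have uw : (u ^ p / w) ^ (1 / p) = u / w ^ (1 / p) := by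
    rw [Real.div_rpow (by positivity) hw0.le, one_div, Real.rpow_rpow_inv hu.le h.ne_zero]
  have vw : (v ^ q / w) ^ (1 / q) = v / w ^ (1 / q) := by
    rw [Real.div_rpow (by positivity) hw0.le, one_div, Real.rpow_rpow_inv hv.le h.symm.ne_zero]
  have uw2 : (u ^ p / w) ^ (2 / p) * w = u ^ 2 * w ^ (1 - 2 / p) := by
    rw [← sq_rpow_one_div (by positivity), uw, div_pow, sq_rpow_one_div hw0.le,
      Real.rpow_sub hw0, Real.rpow_one]
    ring
  have uvw : u / w ^ (1 / p) * (v / w ^ (1 / q)) * w = u * v := by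
    have : w ^ (1 / p) * w ^ (1 / q) = w := by
      rw [← Real.rpow_add hw0, one_div, one_div, h.inv_add_inv_eq_one, Real.rpow_one]
    rw [div_mul_div_comm, this]
    field_simp
  have form := bellmanHessian_rpow_form_nonneg (r := u ^ p / w) (s := v ^ q / w) (σ := σ) (x := x)
    (y := y) h hp (by positivity) (by positivity) (by rw [← add_div, div_self hw0.ne']) hσ
  rw [uw, vw] at form
  calc 0 ≤ _ := mul_nonneg form hw0.le
    _ = _ := by
      rw [← uw2, ← uvw]
      field_simp

theorem convexOn_nazarovTreil_comp {p q σ α β : ℝ} {u v : ℝ → ℝ} {D : Set ℝ}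
    (h : p.HolderConjugate q) (hp : 2 ≤ p) (hσ : |σ| ≤ 1) (hD : Convex ℝ D)
    (hu : ∀ t, HasDerivAt u α t) (hv : ∀ t, HasDerivAt v β t) (hu0 : ∀ t ∈ D, 0 < u t)
    (hv0 : ∀ t ∈ D, 0 < v t) :
    ConvexOn ℝ D fun t => nazarovTreil p q (u t, v t) + σ * (u t * v t) :=
  convexOn_of_hasDerivWithinAt2_nonneg hD
    (fun t ht => (hasDerivAt_nazarovTreil (hu t) (hv t) (hu0 t ht)
      (hv0 t ht)).continuousAt.continuousWithinAt)
    (fun t ht => (hasDerivAt_nazarovTreil (hu t) (hv t) (hu0 t (interior_subset ht))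
      (hv0 t (interior_subset ht))).hasDerivWithinAt)
    (fun t ht => (hasDerivAt_deriv_nazarovTreil (hu t) (hv t) (hu0 t (interior_subset ht))
      (hv0 t (interior_subset ht))).hasDerivWithinAt)
    (fun t ht => nazarovTreil_second_deriv_nonneg h hp (hu0 t (interior_subset ht))
      (hv0 t (interior_subset ht)) hσ)

theorem convexOn_of_lineMap {V : Type*} [AddCommGroup V] [Module ℝ V] {s : Set V} {f : V → ℝ}
    (hs : Convex ℝ s) (hf : ∀ x ∈ s, ∀ y ∈ s,
      ConvexOn ℝ (Set.Icc (0 : ℝ) 1) fun t => f (AffineMap.lineMap x y t)) : ConvexOn ℝ s f := by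
  refine ⟨hs, fun x hx y hy a b ha hb hab => ?_⟩
  have := (hf x hx y hy).2 (Set.left_mem_Icc.2 zero_le_one) (Set.right_mem_Icc.2 zero_le_one)
    ha hb hab
  simpa [AffineMap.lineMap_apply_module, eq_sub_of_add_eq hab] using this

theorem convexOn_closure_of_continuous {V : Type*} [AddCommGroup V] [Module ℝ V]
    [TopologicalSpace V] [IsTopologicalAddGroup V] [ContinuousSMul ℝ V] {s : Set V} {f : V → ℝ}
    (hf : ConvexOn ℝ s f) (hc : Continuous f) : ConvexOn ℝ (closure s) f := by
  refine ⟨hf.1.closure, fun x hx y hy a b ha hb hab => ?_⟩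
  have hclosed : IsClosed {z : V × V | f (a • z.1 + b • z.2) ≤ a • f z.1 + b • f z.2} :=
    isClosed_le (by fun_prop) (by fun_prop)
  have hmem : (x, y) ∈ closure (s ×ˢ s) := by
    rw [closure_prod_eq]
    exact ⟨hx, hy⟩
  exact closure_minimal (fun z hz => hf.2 hz.1 hz.2 ha hb hab) hclosed hmem

theorem continuous_nazarovTreil {p q : ℝ} (hp : 2 ≤ p) (hq : 0 ≤ q) :
    Continuous (nazarovTreil p q) := by
  have h0 : (0 : ℝ) ≤ 1 - 2 / p := by
    rw [sub_nonneg, div_le_one (by linarith)]; exact hp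
  have hu : Continuous fun z : ℝ × ℝ => z.1 ^ p :=
    continuous_fst.rpow_const fun _ => Or.inr (by linarith)
  have hv : Continuous fun z : ℝ × ℝ => z.2 ^ q := continuous_snd.rpow_const fun _ => Or.inr hq
  exact ((continuous_fst.pow 2).mul ((hu.add hv).rpow_const fun _ => Or.inr h0)).add
    (hv.const_mul _)

theorem convexOn_nazarovTreil_add {p q σ : ℝ} (h : p.HolderConjugate q) (hp : 2 ≤ p)
    (hσ : |σ| ≤ 1) :
    ConvexOn ℝ (Set.Ici 0 ×ˢ Set.Ici 0) fun z => nazarovTreil p q z + σ * (z.1 * z.2) := by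
  have hopen : ConvexOn ℝ (Set.Ioi (0 : ℝ) ×ˢ Set.Ioi (0 : ℝ))
      fun z => nazarovTreil p q z + σ * (z.1 * z.2) := by
    refine convexOn_of_lineMap ((convex_Ioi 0).prod (convex_Ioi 0)) fun x hx y hy => ?_
    have hline : ∀ t ∈ Set.Icc (0 : ℝ) 1,
        AffineMap.lineMap x y t ∈ Set.Ioi (0 : ℝ) ×ˢ Set.Ioi (0 : ℝ) := fun t ht =>
      ((convex_Ioi 0).prod (convex_Ioi 0)).lineMap_mem hx hy ht
    simp only [Set.mem_prod, AffineMap.fst_lineMap, AffineMap.snd_lineMap, Set.mem_Ioi] at hline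
    exact convexOn_nazarovTreil_comp h hp hσ (convex_Icc 0 1)
      (fun t => AffineMap.hasDerivAt_lineMap (a := x.1) (b := y.1))
      (fun t => AffineMap.hasDerivAt_lineMap (a := x.2) (b := y.2))
      (fun t ht => (hline t ht).1) (fun t ht => (hline t ht).2)
  have hc := (continuous_nazarovTreil hp h.symm.nonneg).add
    ((continuous_fst.mul continuous_snd).const_mul σ)
  simpa only [closure_prod_eq, closure_Ioi] using convexOn_closure_of_continuous hopen hc

theorem nazarovTreil_add_mul_le {p q : ℝ} (h : p.HolderConjugate q) (hp : 2 ≤ p) {z z' : ℝ × ℝ}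
    (hz : z ∈ Set.Ici (0 : ℝ) ×ˢ Set.Ici (0 : ℝ)) (hz' : z' ∈ Set.Ici (0 : ℝ) ×ˢ Set.Ici (0 : ℝ))
    {a b : ℝ} (ha : 0 ≤ a) (hb : 0 ≤ b) (hab : a + b = 1) :
    nazarovTreil p q (a • z + b • z') + a * b * (|z.1 - z'.1| * |z.2 - z'.2|)
      ≤ a * nazarovTreil p q z + b * nazarovTreil p q z' := by
  have twisted : ∀ σ : ℝ, |σ| ≤ 1 → nazarovTreil p q (a • z + b • z')
      + a * b * (-σ * ((z.1 - z'.1) * (z.2 - z'.2)))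
        ≤ a * nazarovTreil p q z + b * nazarovTreil p q z' := fun σ hσ => by
    have := (convexOn_nazarovTreil_add h hp hσ).2 hz hz' ha hb hab
    simp only [smul_eq_mul, Prod.fst_add, Prod.smul_fst, Prod.snd_add, Prod.smul_snd] at this
    obtain rfl := eq_sub_of_add_eq hab
    linarith
  rw [← abs_mul]
  rcases abs_cases ((z.1 - z'.1) * (z.2 - z'.2)) with ⟨habs, -⟩ | ⟨habs, -⟩ <;> rw [habs]
  · simpa using twisted (-1) (by simp)
  · simpa using twisted 1 (by simp)

theorem nazarovTreil_mono {p q : ℝ} (h : p.HolderConjugate q) (hp : 2 ≤ p) {u v u' v' : ℝ}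
    (hu : 0 ≤ u) (hv : 0 ≤ v) (huu' : u ≤ u') (hvv' : v ≤ v') :
    nazarovTreil p q (u, v) ≤ nazarovTreil p q (u', v') := by
  have := h.nonneg
  have := h.symm.pos
  have : 0 < q - 1 := h.symm.sub_one_pos
  have : 0 ≤ 1 - 2 / p := by rw [sub_nonneg, div_le_one h.pos]; exact hp
  unfold nazarovTreil
  gcongr

theorem nazarovTreil_nonneg {p q : ℝ} (hq : 1 < q) {u v : ℝ} (hu : 0 ≤ u) (hv : 0 ≤ v) :
    0 ≤ nazarovTreil p q (u, v) := by
  have : 0 < q - 1 := sub_pos.2 hq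
  unfold nazarovTreil
  positivity

theorem nazarovTreil_le {p q : ℝ} (hp : 0 < p) (hq : 1 < q) {u v : ℝ} (hu : 0 ≤ u) (hv : 0 ≤ v) :
    nazarovTreil p q (u, v) ≤ (2 + 13 / (q * (q - 1))) * (u ^ p + v ^ q) := by
  have : 0 < q - 1 := sub_pos.2 hq
  have hw : 0 ≤ u ^ p + v ^ q := by positivity
  have hu2 : u ^ 2 ≤ (u ^ p + v ^ q) ^ (2 / p) := calc
    u ^ 2 = (u ^ p) ^ (2 / p) := by
      rw [← Real.rpow_mul hu, mul_div_cancel₀ _ hp.ne', Real.rpow_ofNat]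
    _ ≤ _ := by gcongr; exact le_add_of_nonneg_right (by positivity)
  have mixed : u ^ 2 * (u ^ p + v ^ q) ^ (1 - 2 / p) ≤ u ^ p + v ^ q := calc
    _ ≤ (u ^ p + v ^ q) ^ (2 / p) * (u ^ p + v ^ q) ^ (1 - 2 / p) := by gcongr
    _ = _ := by rw [← Real.rpow_add' hw (by norm_num), add_sub_cancel, Real.rpow_one]
  have pure : (1 + 13 / (q * (q - 1))) * v ^ q ≤ (1 + 13 / (q * (q - 1))) * (u ^ p + v ^ q) := by
    gcongr
    exact le_add_of_nonneg_left (by positivity)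
  unfold nazarovTreil
  linarith

/-- A Bellman function for the exponents `p` and `q` on the plane: a nonnegative function of growth
`|u|ᵖ + |v|^q` whose convexity defect on a segment controls the product of the increments of the
two coordinates. -/
structure IsBellmanFunction (p q C : ℝ) (B : ℝ × ℝ → ℝ) : Prop where
  continuous : Continuous B
  nonneg : ∀ z, 0 ≤ B z
  le : ∀ z, B z ≤ C * (|z.1| ^ p + |z.2| ^ q)
  add_mul_le : ∀ (z z' : ℝ × ℝ) (a b : ℝ), 0 ≤ a → 0 ≤ b → a + b = 1 →
    B (a • z + b • z') + a * b * (|z.1 - z'.1| * |z.2 - z'.2|) ≤ a * B z + b * B z'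

namespace IsBellmanFunction

variable {p q C : ℝ} {B : ℝ × ℝ → ℝ}

theorem convexOn (hB : IsBellmanFunction p q C B) : ConvexOn ℝ Set.univ B :=
  ⟨convex_univ, fun z _ z' _ a b ha hb hab =>
    (le_add_of_nonneg_right (by positivity)).trans (hB.add_mul_le z z' a b ha hb hab)⟩

theorem map_zero (hB : IsBellmanFunction p q C B) (hp : p ≠ 0) (hq : q ≠ 0) : B 0 = 0 :=
  le_antisymm (by simpa [hp, hq] using hB.le 0) (hB.nonneg 0)

theorem swap (hB : IsBellmanFunction p q C B) : IsBellmanFunction q p C (B ∘ Prod.swap) where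
  continuous := hB.continuous.comp continuous_swap
  nonneg z := hB.nonneg z.swap
  le z := by rw [add_comm]; exact hB.le z.swap
  add_mul_le z z' a b ha hb hab := by
    rw [mul_comm |z.1 - z'.1|]
    exact hB.add_mul_le z.swap z'.swap a b ha hb hab

end IsBellmanFunction

theorem nazarovTreil_comp_add_mul_le {p q : ℝ} (h : p.HolderConjugate q) (hp : 2 ≤ p)
    {φ ψ : ℝ → ℝ} (hφ : ConvexOn ℝ Set.univ φ) (hψ : ConvexOn ℝ Set.univ ψ) (hφ0 : ∀ t, 0 ≤ φ t)
    (hψ0 : ∀ t, 0 ≤ ψ t) (z z' : ℝ × ℝ) {a b : ℝ} (ha : 0 ≤ a) (hb : 0 ≤ b) (hab : a + b = 1) :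
    nazarovTreil p q (φ (a * z.1 + b * z'.1), ψ (a * z.2 + b * z'.2))
        + a * b * (|φ z.1 - φ z'.1| * |ψ z.2 - ψ z'.2|)
      ≤ a * nazarovTreil p q (φ z.1, ψ z.2) + b * nazarovTreil p q (φ z'.1, ψ z'.2) := by
  have mono := nazarovTreil_mono h hp (hφ0 _) (hψ0 _)
    (hφ.2 (Set.mem_univ z.1) (Set.mem_univ z'.1) ha hb hab)
    (hψ.2 (Set.mem_univ z.2) (Set.mem_univ z'.2) ha hb hab)
  have gap := nazarovTreil_add_mul_le h hp (z := (φ z.1, ψ z.2)) (z' := (φ z'.1, ψ z'.2))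
    ⟨hφ0 _, hψ0 _⟩ ⟨hφ0 _, hψ0 _⟩ ha hb hab
  exact (add_le_add_left mono _).trans gap

/-- The Nazarov–Treil function extended to the plane by summing over the quadrants, which keeps it
convex across the coordinate axes. -/
noncomputable def planeNazarovTreil (p q : ℝ) (z : ℝ × ℝ) : ℝ :=
  nazarovTreil p q (z.1⁺, z.2⁺) + nazarovTreil p q (z.1⁺, z.2⁻) +
    nazarovTreil p q (z.1⁻, z.2⁺) + nazarovTreil p q (z.1⁻, z.2⁻)

theorem abs_sub_le_posPart_add_negPart (s t : ℝ) : |s - t| ≤ |s⁺ - t⁺| + |s⁻ - t⁻| := by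
  conv_lhs => rw [← posPart_sub_negPart s, ← posPart_sub_negPart t, sub_sub_sub_comm]
  exact abs_sub _ _

theorem convexOn_posPart : ConvexOn ℝ Set.univ fun t : ℝ => t⁺ :=
  (convexOn_id convex_univ).sup (convexOn_const 0 convex_univ)

theorem convexOn_negPart : ConvexOn ℝ Set.univ fun t : ℝ => t⁻ :=
  (concaveOn_id convex_univ).neg.sup (convexOn_const 0 convex_univ)

theorem posPart_le_abs (t : ℝ) : t⁺ ≤ |t| := sup_le (le_abs_self t) (abs_nonneg t)

theorem negPart_le_abs (t : ℝ) : t⁻ ≤ |t| := sup_le (neg_le_abs t) (abs_nonneg t)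

theorem isBellmanFunction_planeNazarovTreil {p q : ℝ} (h : p.HolderConjugate q) (hp : 2 ≤ p) :
    IsBellmanFunction p q (4 * (2 + 13 / (q * (q - 1)))) (planeNazarovTreil p q) where
  continuous := by
    have := continuous_nazarovTreil hp h.symm.nonneg
    unfold planeNazarovTreil
    fun_prop
  nonneg z := by
    have part {u v : ℝ} (hu : 0 ≤ u) (hv : 0 ≤ v) := nazarovTreil_nonneg (p := p) h.symm.lt hu hv
    exact add_nonneg (add_nonneg (add_nonneg (part (posPart_nonneg _) (posPart_nonneg _))
      (part (posPart_nonneg _) (negPart_nonneg _))) (part (negPart_nonneg _) (posPart_nonneg _)))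
      (part (negPart_nonneg _) (negPart_nonneg _))
  le z := by
    have bound {u v : ℝ} (hu : 0 ≤ u) (hv : 0 ≤ v) (hu' : u ≤ |z.1|) (hv' : v ≤ |z.2|) :=
      (nazarovTreil_mono h hp hu hv hu' hv').trans
        (nazarovTreil_le h.pos h.symm.lt (abs_nonneg z.1) (abs_nonneg z.2))
    have := bound (posPart_nonneg _) (posPart_nonneg _) (posPart_le_abs _) (posPart_le_abs _)
    have := bound (posPart_nonneg _) (negPart_nonneg _) (posPart_le_abs _) (negPart_le_abs _)
    have := bound (negPart_nonneg _) (posPart_nonneg _) (negPart_le_abs _) (posPart_le_abs _)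
    have := bound (negPart_nonneg _) (negPart_nonneg _) (negPart_le_abs _) (negPart_le_abs _)
    unfold planeNazarovTreil
    linarith
  add_mul_le z z' a b ha hb hab := by
    have increments := mul_le_mul (abs_sub_le_posPart_add_negPart z.1 z'.1)
      (abs_sub_le_posPart_add_negPart z.2 z'.2) (abs_nonneg _) (by positivity)
    have := mul_le_mul_of_nonneg_left increments (mul_nonneg ha hb)
    have part {φ ψ : ℝ → ℝ} (hφ : ConvexOn ℝ Set.univ φ) (hψ : ConvexOn ℝ Set.univ ψ)
        (hφ0 : ∀ t, 0 ≤ φ t) (hψ0 : ∀ t, 0 ≤ ψ t) :=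
      nazarovTreil_comp_add_mul_le h hp hφ hψ hφ0 hψ0 z z' ha hb hab
    have := part convexOn_posPart convexOn_posPart posPart_nonneg posPart_nonneg
    have := part convexOn_posPart convexOn_negPart posPart_nonneg negPart_nonneg
    have := part convexOn_negPart convexOn_posPart negPart_nonneg posPart_nonneg
    have := part convexOn_negPart convexOn_negPart negPart_nonneg negPart_nonneg
    simp only [planeNazarovTreil, Prod.fst_add, Prod.smul_fst, Prod.snd_add, Prod.smul_snd,
      smul_eq_mul]
    linarith

theorem exists_isBellmanFunction {p q : ℝ} (h : p.HolderConjugate q) :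
    ∃ C > 0, ∃ B, IsBellmanFunction p q C B := by
  wlog hp : 2 ≤ p generalizing p q with H
  · have hq : 2 ≤ q := by
      rw [h.conjugate_eq, le_div_iff₀ h.sub_one_pos]
      linarith
    obtain ⟨C, hC, B, hB⟩ := H h.symm hq
    exact ⟨C, hC, _, hB.swap⟩
  · have hq0 := h.symm.pos
    have hq1 : 0 < q - 1 := h.symm.sub_one_pos
    exact ⟨_, by positivity, _, isBellmanFunction_planeNazarovTreil h hp⟩

end Bellman

section LazyWalk

open scoped CompactlySupported

variable {E : Type*} [TopologicalSpace E]

section Integral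

variable [MeasurableSpace E] [BorelSpace E] (μ : Measure E) [IsFiniteMeasureOnCompacts μ]

/-- The `L²(μ)` inner product on continuous functions with compact support. -/
noncomputable def l2Pairing : LinearMap.BilinForm ℝ C_c(E, ℝ) :=
  LinearMap.mk₂ ℝ (fun f g => ∫ x, f x * g x ∂μ)
    (fun f₁ f₂ g => by
      simpa [add_mul] using integral_add (f₁ * g).integrable (f₂ * g).integrable)
    (fun c f g => by simp [mul_assoc, integral_const_mul])
    (fun f g₁ g₂ => by
      simpa [mul_add] using integral_add (f * g₁).integrable (f * g₂).integrable)
    (fun c f g => by simp [mul_left_comm, integral_const_mul])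

theorem l2Pairing_apply (f g : C_c(E, ℝ)) : l2Pairing μ f g = ∫ x, f x * g x ∂μ := rfl

theorem integrable_abs_rpow {r : ℝ} (hr : 0 < r) (f : C_c(E, ℝ)) :
    Integrable (fun x => |f x| ^ r) μ :=
  (f.continuous.abs.rpow_const fun _ => .inr hr.le).integrable_of_hasCompactSupport
    (f.hasCompactSupport.comp_left (g := fun t => |t| ^ r) (by simp [hr.ne']))

end Integral

variable [AddCommGroup E] [IsTopologicalAddGroup E] {ι : Type*}

/-- Translation `f ↦ f (· + v)` of continuous functions with compact support. -/
def translateCc (v : E) : Module.End ℝ C_c(E, ℝ) :=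
  CompactlySupportedContinuousMap.compLinearMap (Homeomorph.addRight v).toCocompactMap

@[simp]
theorem translateCc_apply (v : E) (f : C_c(E, ℝ)) (x : E) : translateCc v f x = f (x + v) := rfl

theorem commute_translateCc (v w : E) : Commute (translateCc v) (translateCc w) := by
  ext f x
  simp [add_right_comm]

theorem translateCc_neg_mul_translateCc (v : E) : translateCc (-v) * translateCc v = 1 := by
  ext f x
  simp

/-- The symmetric second difference `f (· + v) + f (· - v) - 2 f`. -/
def secondDiff (v : E) : Module.End ℝ C_c(E, ℝ) :=
  translateCc v + translateCc (-v) + (-2 : ℝ) • 1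

theorem secondDiff_apply (v : E) (f : C_c(E, ℝ)) (x : E) :
    secondDiff v f x = f (x + v) + f (x - v) - 2 * f x := by
  simp [secondDiff, sub_eq_add_neg]

theorem commute_secondDiff (v w : E) : Commute (secondDiff v) (secondDiff w) := by
  have h (a : E) : Commute (translateCc a) (secondDiff w) := by
    rw [secondDiff]
    exact ((commute_translateCc a w).add_right (commute_translateCc a (-w))).add_right
      ((Commute.one_right _).smul_right _)
  rw [secondDiff]
  exact ((h v).add_left (h (-v))).add_left ((Commute.one_left _).smul_left _)

/-- The transition operator of the lazy random walk that stays put with probability `1 / 2` and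
otherwise makes one of the steps `± v k`, all equally likely. -/
noncomputable def lazyWalk [Fintype ι] (v : ι → E) : Module.End ℝ C_c(E, ℝ) :=
  1 + (4 * Fintype.card ι : ℝ)⁻¹ • ∑ k, secondDiff (v k)

theorem commute_secondDiff_lazyWalk [Fintype ι] (v : ι → E) (w : E) :
    Commute (secondDiff w) (lazyWalk v) :=
  (Commute.one_right _).add_right
    ((Commute.sum_right _ _ _ fun k _ => commute_secondDiff w (v k)).smul_right _)

theorem lazyWalk_apply [Fintype ι] [Nonempty ι] (v : ι → E) (f : C_c(E, ℝ)) (x : E) :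
    lazyWalk v f x = ∑ k, (Fintype.card ι : ℝ)⁻¹ *
      (1 / 2 * f x + 1 / 4 * f (x + v k) + 1 / 4 * f (x - v k)) := by
  have hcard : (Fintype.card ι : ℝ) ≠ 0 := by exact_mod_cast Fintype.card_ne_zero
  have hone : f x = ∑ _k : ι, (Fintype.card ι : ℝ)⁻¹ * f x := by simp [hcard]
  have hwalk : lazyWalk v f x
      = f x + (4 * Fintype.card ι : ℝ)⁻¹ * ∑ k, (f (x + v k) + f (x - v k) - 2 * f x) := by
    simp [lazyWalk, secondDiff_apply]
  rw [hwalk, hone, Finset.mul_sum, ← Finset.sum_add_distrib]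
  refine Finset.sum_congr rfl fun k _ => ?_
  rw [← hone]
  ring

variable [MeasurableSpace E] [BorelSpace E] (μ : Measure E) [IsFiniteMeasureOnCompacts μ]
  [μ.IsAddLeftInvariant]

theorem isAdjointPair_translateCc (v : E) :
    LinearMap.IsAdjointPair (l2Pairing μ) (l2Pairing μ) (translateCc v) (translateCc (-v)) := by
  intro f g
  rw [l2Pairing_apply, l2Pairing_apply,
    ← integral_add_right_eq_self (fun x => f x * translateCc (-v) g x) v]
  simp

theorem isSelfAdjoint_secondDiff (v : E) : (l2Pairing μ).IsSelfAdjoint (secondDiff v) := by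
  have h := (isAdjointPair_translateCc μ v).add (isAdjointPair_translateCc μ (-v))
  rw [neg_neg, add_comm (⇑(translateCc (-v)))] at h
  exact h.add (LinearMap.isAdjointPair_id.smul (-2))

theorem isSelfAdjoint_lazyWalk [Fintype ι] (v : ι → E) :
    (l2Pairing μ).IsSelfAdjoint (lazyWalk v) := by
  intro f g
  have h (k : ι) := isSelfAdjoint_secondDiff μ (v k) f g
  simp [lazyWalk, h]

theorem l2Pairing_secondDiff (v : E) (f g : C_c(E, ℝ)) :
    l2Pairing μ (secondDiff v f) g
      = -l2Pairing μ (translateCc v f - f) (translateCc v g - g) := by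
  have forward := isAdjointPair_translateCc μ v f (translateCc v g)
  have backward := isAdjointPair_translateCc μ (-v) f g
  rw [← Module.End.mul_apply, translateCc_neg_mul_translateCc, Module.End.one_apply] at forward
  rw [neg_neg] at backward
  simp only [secondDiff, LinearMap.add_apply, LinearMap.smul_apply, Module.End.one_apply, map_add,
    map_sub, LinearMap.sub_apply, map_smul, smul_eq_mul]
  linarith

theorem integral_secondDiff (v : E) (f : C_c(E, ℝ)) : ∫ x, secondDiff v f x ∂μ = 0 := by
  have h (w : E) : Integrable (fun x => f (x + w)) μ := (translateCc w f).integrable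
  simp only [secondDiff_apply, sub_eq_add_neg (_ : E)]
  rw [integral_sub (f := fun x => f (x + v) + f (x + -v)) ((h v).add (h (-v)))
    (f.integrable.const_mul 2), integral_add (h v) (h (-v)),
    integral_const_mul, integral_add_right_eq_self (fun x => f x) v,
    integral_add_right_eq_self (fun x => f x) (-v)]
  ring

theorem integral_lazyWalk [Fintype ι] (v : ι → E) (f : C_c(E, ℝ)) :
    ∫ x, lazyWalk v f x ∂μ = ∫ x, f x ∂μ := by
  have h (k : ι) := (secondDiff (v k) f).integrable (μ := μ)
  simp only [lazyWalk, LinearMap.add_apply, Module.End.one_apply, LinearMap.smul_apply,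
    LinearMap.sum_apply, CompactlySupportedContinuousMap.add_apply,
    CompactlySupportedContinuousMap.smul_apply, CompactlySupportedContinuousMap.sum_apply,
    smul_eq_mul]
  rw [integral_add f.integrable ((integrable_finsetSum _ fun k _ => h k).const_mul _),
    integral_const_mul, integral_finsetSum _ fun k _ => h k]
  simp [integral_secondDiff]

end LazyWalk

section Energy

open scoped CompactlySupported

variable {E ι : Type*} [TopologicalSpace E] {p q C : ℝ} {B : ℝ × ℝ → ℝ}

namespace IsBellmanFunction

/-- The compactly supported function `B ∘ (U, V)`. -/
def comp (hB : IsBellmanFunction p q C B) (hp : p ≠ 0) (hq : q ≠ 0) (U V : C_c(E, ℝ)) :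
    C_c(E, ℝ) where
  toFun x := B (U x, V x)
  continuous_toFun := hB.continuous.comp (by fun_prop)
  hasCompactSupport' :=
    U.hasCompactSupport.comp₂_left (m := fun a b => B (a, b)) V.hasCompactSupport
      (hB.map_zero hp hq)

theorem convexCombination_le (hB : IsBellmanFunction p q C B) (z z₁ z₂ : ℝ × ℝ) :
    B ((1 / 2 : ℝ) • z + (1 / 4 : ℝ) • z₁ + (1 / 4 : ℝ) • z₂)
      + 1 / 8 * (|z₁.1 - z.1| * |z₁.2 - z.2|) ≤ 1 / 2 * B z + 1 / 4 * B z₁ + 1 / 4 * B z₂ := by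
  have outer := hB.convexOn.2 (Set.mem_univ ((1 / 2 : ℝ) • z + (1 / 2 : ℝ) • z₁))
    (Set.mem_univ ((1 / 2 : ℝ) • z + (1 / 2 : ℝ) • z₂))
    one_half_pos.le one_half_pos.le (add_halves 1)
  have inner₁ := hB.add_mul_le z z₁ (1 / 2) (1 / 2) (by norm_num) (by norm_num) (by norm_num)
  have inner₂ := hB.convexOn.2 (Set.mem_univ z) (Set.mem_univ z₂)
    one_half_pos.le one_half_pos.le (add_halves 1)
  have split : (1 / 2 : ℝ) • z + (1 / 4 : ℝ) • z₁ + (1 / 4 : ℝ) • z₂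
      = (1 / 2 : ℝ) • ((1 / 2 : ℝ) • z + (1 / 2 : ℝ) • z₁)
        + (1 / 2 : ℝ) • ((1 / 2 : ℝ) • z + (1 / 2 : ℝ) • z₂) := by module
  rw [split, abs_sub_comm z₁.1, abs_sub_comm z₁.2]
  simp only [smul_eq_mul] at outer inner₁ inner₂ ⊢
  linarith

variable [AddCommGroup E] [IsTopologicalAddGroup E]

theorem lazyWalk_add_le [Fintype ι] (hB : IsBellmanFunction p q C B) (hp : p ≠ 0)
    (hq : q ≠ 0) (v : ι → E) (j : ι) (U V : C_c(E, ℝ)) (x : E) :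
    B (lazyWalk v U x, lazyWalk v V x)
        + (8 * Fintype.card ι : ℝ)⁻¹ * (|U (x + v j) - U x| * |V (x + v j) - V x|)
      ≤ lazyWalk v (hB.comp hp hq U V) x := by
  have : Nonempty ι := ⟨j⟩
  set n : ℝ := (Fintype.card ι : ℝ) with hn
  have hn0 : 0 < n := by rw [hn]; exact_mod_cast Fintype.card_pos
  let Z (y : E) : ℝ × ℝ := (U y, V y)
  let Δ (k : ι) : ℝ := |U (x + v k) - U x| * |V (x + v k) - V x|
  let m (k : ι) : ℝ × ℝ :=
    (1 / 2 : ℝ) • Z x + (1 / 4 : ℝ) • Z (x + v k) + (1 / 4 : ℝ) • Z (x - v k)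
  have mean : (lazyWalk v U x, lazyWalk v V x) = ∑ k, n⁻¹ • m k := by
    ext <;> simp [lazyWalk_apply, m, Z, Prod.fst_sum, Prod.snd_sum, ← hn]
  have jensen : B (∑ k, n⁻¹ • m k) ≤ ∑ k, n⁻¹ • B (m k) :=
    hB.convexOn.map_sum_le (fun _ _ => by positivity)
      (by simp [← hn, hn0.ne']) (fun _ _ => Set.mem_univ _)
  have gain : n⁻¹ * (1 / 8 * Δ j) ≤ ∑ k, n⁻¹ * (1 / 8 * Δ k) :=
    Finset.single_le_sum (f := fun k => n⁻¹ * (1 / 8 * Δ k))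
      (fun k _ => by positivity) (Finset.mem_univ j)
  calc B (lazyWalk v U x, lazyWalk v V x) + (8 * n)⁻¹ * Δ j
      = B (∑ k, n⁻¹ • m k) + n⁻¹ * (1 / 8 * Δ j) := by rw [mean, mul_inv]; ring
    _ ≤ ∑ k, n⁻¹ • B (m k) + ∑ k, n⁻¹ * (1 / 8 * Δ k) := add_le_add jensen gain
    _ = ∑ k, n⁻¹ * (B (m k) + 1 / 8 * Δ k) := by
      simp only [smul_eq_mul, mul_add, Finset.sum_add_distrib]
    _ ≤ ∑ k, n⁻¹ * (1 / 2 * B (Z x) + 1 / 4 * B (Z (x + v k)) + 1 / 4 * B (Z (x - v k))) := by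
      exact Finset.sum_le_sum fun k _ => mul_le_mul_of_nonneg_left
        (hB.convexCombination_le (Z x) (Z (x + v k)) (Z (x - v k))) (by positivity)
    _ = _ := by rw [lazyWalk_apply]; rfl

end IsBellmanFunction

variable [AddCommGroup E] [IsTopologicalAddGroup E] [MeasurableSpace E] [BorelSpace E]
  (μ : Measure E)

/-- The absolute energy of a pair of functions along `v`; it dominates the `L²` pairing of
`secondDiff v U` with `V`. -/
noncomputable def absEnergy (v : E) (U V : C_c(E, ℝ)) : ℝ :=
  ∫ x, |U (x + v) - U x| * |V (x + v) - V x| ∂μ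

variable [IsFiniteMeasureOnCompacts μ]

theorem integrable_absEnergy (v : E) (U V : C_c(E, ℝ)) :
    Integrable (fun x => |U (x + v) - U x| * |V (x + v) - V x|) μ := by
  simpa [abs_mul] using ((translateCc v U - U) * (translateCc v V - V)).integrable.abs (μ := μ)

variable [μ.IsAddLeftInvariant]

theorem abs_l2Pairing_secondDiff_le (v : E) (U V : C_c(E, ℝ)) :
    |l2Pairing μ (secondDiff v U) V| ≤ absEnergy μ v U V := by
  rw [l2Pairing_secondDiff, abs_neg, l2Pairing_apply]
  refine abs_integral_le_integral_abs.trans_eq (integral_congr_ae (.of_forall fun x => ?_))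
  simp [abs_mul]

variable [Fintype ι] (v : ι → E) (j : ι) (U V : C_c(E, ℝ))

theorem IsBellmanFunction.integral_lazyWalk_add_le (hB : IsBellmanFunction p q C B) (hp : p ≠ 0)
    (hq : q ≠ 0) :
    ∫ x, hB.comp hp hq (lazyWalk v U) (lazyWalk v V) x ∂μ
        + (8 * Fintype.card ι : ℝ)⁻¹ * absEnergy μ (v j) U V
      ≤ ∫ x, hB.comp hp hq U V x ∂μ := by
  have hE := (integrable_absEnergy μ (v j) U V).const_mul (8 * Fintype.card ι : ℝ)⁻¹
  rw [absEnergy, ← integral_const_mul, ← integral_add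
    (CompactlySupportedContinuousMap.integrable _) hE, ← integral_lazyWalk μ v]
  exact integral_mono ((CompactlySupportedContinuousMap.integrable _).add hE)
    (CompactlySupportedContinuousMap.integrable _) (hB.lazyWalk_add_le hp hq v j U V)

theorem IsBellmanFunction.sum_absEnergy_le (hB : IsBellmanFunction p q C B) (hp : 0 < p)
    (hq : 0 < q) (N : ℕ) :
    ∑ n ∈ Finset.range N, absEnergy μ (v j) ((lazyWalk v ^ n) U) ((lazyWalk v ^ n) V)
      ≤ 8 * Fintype.card ι * (C * (∫ x, |U x| ^ p ∂μ + ∫ x, |V x| ^ q ∂μ)) := by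
  have : Nonempty ι := ⟨j⟩
  have hcard : (0 : ℝ) < 8 * Fintype.card ι := by exact_mod_cast mul_pos (by simp) Fintype.card_pos
  let b (n : ℕ) : ℝ := ∫ x, hB.comp hp.ne' hq.ne' ((lazyWalk v ^ n) U) ((lazyWalk v ^ n) V) x ∂μ
  have decrease (n : ℕ) : absEnergy μ (v j) ((lazyWalk v ^ n) U) ((lazyWalk v ^ n) V)
      ≤ 8 * Fintype.card ι * (b n - b (n + 1)) := by
    have h := hB.integral_lazyWalk_add_le μ v j ((lazyWalk v ^ n) U) ((lazyWalk v ^ n) V)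
      hp.ne' hq.ne'
    rw [← Module.End.mul_apply, ← Module.End.mul_apply, ← pow_succ'] at h
    rw [← inv_mul_le_iff₀ hcard]
    exact le_sub_iff_add_le'.2 h
  have final : 0 ≤ b N := integral_nonneg fun x => hB.nonneg _
  have initial : b 0 ≤ C * (∫ x, |U x| ^ p ∂μ + ∫ x, |V x| ^ q ∂μ) := by
    have hU := integrable_abs_rpow μ hp U
    have hV := integrable_abs_rpow μ hq V
    rw [← integral_add hU hV, ← integral_const_mul]
    exact integral_mono (CompactlySupportedContinuousMap.integrable _) ((hU.add hV).const_mul C)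
      fun x => hB.le (U x, V x)
  calc _ ≤ ∑ n ∈ Finset.range N, 8 * Fintype.card ι * (b n - b (n + 1)) :=
        Finset.sum_le_sum fun n _ => decrease n
    _ = 8 * Fintype.card ι * (b 0 - b N) := by rw [← Finset.mul_sum, Finset.sum_range_sub']
    _ ≤ _ := by gcongr; linarith

theorem abs_le_of_sum_le_of_abs_sub_le {a ε η : ℕ → ℝ} {M M' : ℝ}
    (hε : ∀ n, |a n| ≤ ε n) (hεM : ∀ N, ∑ n ∈ Finset.range N, ε n ≤ M)
    (hη : ∀ n, |a n - a (n + 1)| ≤ η n) (hηM : ∀ N, ∑ n ∈ Finset.range N, η n ≤ M') :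
    |a 0| ≤ M' := by
  have hsum : Summable ε :=
    summable_of_sum_range_le (fun n => (abs_nonneg _).trans (hε n)) hεM
  have hlim : Filter.Tendsto (fun N => M' + ε N) .atTop (nhds (M' + 0)) :=
    hsum.tendsto_atTop_zero.const_add M'
  rw [← add_zero M']
  refine ge_of_tendsto' hlim fun N => ?_
  calc |a 0| = |∑ n ∈ Finset.range N, (a n - a (n + 1)) + a N| := by
        rw [Finset.sum_range_sub', sub_add_cancel]
    _ ≤ ∑ n ∈ Finset.range N, |a n - a (n + 1)| + |a N| :=
        (abs_add_le _ _).trans (by gcongr; exact Finset.abs_sum_le_sum_abs _ _)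
    _ ≤ ∑ n ∈ Finset.range N, η n + ε N := by gcongr with n; exacts [hη n, hε N]
    _ ≤ M' + ε N := by gcongr; exact hηM N

/- `⟨S Pⁿ U, Pⁿ V⟩` telescopes, with increments `⟨S Pⁿ (1 - P²) U, Pⁿ V⟩` because `P` is symmetric
and commutes with `S`. -/
theorem IsBellmanFunction.abs_l2Pairing_secondDiff_le (hB : IsBellmanFunction p q C B)
    (hp : 0 < p) (hq : 0 < q) :
    |l2Pairing μ (secondDiff (v j) U) V| ≤ 8 * Fintype.card ι *
      (C * (∫ x, |(U - (lazyWalk v ^ 2) U) x| ^ p ∂μ + ∫ x, |V x| ^ q ∂μ)) := by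
  set P := lazyWalk v with hP
  set S := secondDiff (v j)
  have hSP : Commute S P := commute_secondDiff_lazyWalk v (v j)
  have increment (n : ℕ) : l2Pairing μ (S ((P ^ n) U)) ((P ^ n) V)
      - l2Pairing μ (S ((P ^ (n + 1)) U)) ((P ^ (n + 1)) V)
      = l2Pairing μ (S ((P ^ n) (U - (P ^ 2) U))) ((P ^ n) V) := by
    have move : l2Pairing μ (S ((P ^ (n + 1)) U)) ((P ^ (n + 1)) V)
        = l2Pairing μ (S ((P ^ n) ((P ^ 2) U))) ((P ^ n) V) := by
      rw [pow_succ' P n, Module.End.mul_apply P _ V, ← isSelfAdjoint_lazyWalk μ v]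
      simp only [← Module.End.mul_apply, ← hP]
      rw [← mul_assoc P S, ← hSP.eq, mul_assoc S P, ← mul_assoc P P, ← pow_two,
        (Commute.pow_pow_self P 2 n).eq]
    rw [move]
    simp
  simpa using abs_le_of_sum_le_of_abs_sub_le
    (a := fun n => l2Pairing μ (S ((P ^ n) U)) ((P ^ n) V))
    (fun n => _root_.abs_l2Pairing_secondDiff_le μ (v j) _ _)
    (hB.sum_absEnergy_le μ v j U V hp hq)
    (fun n => by rw [increment]; exact _root_.abs_l2Pairing_secondDiff_le μ (v j) _ _)
    (hB.sum_absEnergy_le μ v j (U - (P ^ 2) U) V hp hq)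

end Energy

section SignedRpow

/-- The signed power `sign t * |t| ^ r`, written so that it is visibly continuous for `0 < r`. -/
noncomputable def signedRpow (r t : ℝ) : ℝ := t⁺ ^ r - t⁻ ^ r

theorem continuous_signedRpow {r : ℝ} (hr : 0 < r) : Continuous (signedRpow r) :=
  (continuous_posPart.rpow_const fun _ => .inr hr.le).sub
    (continuous_negPart.rpow_const fun _ => .inr hr.le)

theorem signedRpow_zero (r : ℝ) : signedRpow r 0 = 0 := by simp [signedRpow]

theorem abs_signedRpow {r : ℝ} (hr : 0 < r) (t : ℝ) : |signedRpow r t| = |t| ^ r := by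
  rcases le_total t 0 with h | h
  · rw [signedRpow, posPart_of_nonpos h, negPart_of_nonpos h, Real.zero_rpow hr.ne', zero_sub,
      abs_neg, abs_of_nonpos h, abs_of_nonneg (Real.rpow_nonneg (neg_nonneg.2 h) r)]
  · rw [signedRpow, posPart_of_nonneg h, negPart_of_nonneg h, Real.zero_rpow hr.ne', sub_zero,
      abs_of_nonneg h, abs_of_nonneg (Real.rpow_nonneg h r)]

theorem mul_signedRpow {r : ℝ} (hr : 0 < r) (t : ℝ) : t * signedRpow r t = |t| ^ (r + 1) := by
  rw [Real.rpow_add_one' (abs_nonneg t) (by positivity)]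
  rcases le_total t 0 with h | h
  · rw [signedRpow, posPart_of_nonpos h, negPart_of_nonpos h, Real.zero_rpow hr.ne',
      abs_of_nonpos h]
    ring
  · rw [signedRpow, posPart_of_nonneg h, negPart_of_nonneg h, Real.zero_rpow hr.ne',
      abs_of_nonneg h]
    ring

end SignedRpow

section DiscreteEstimate

open scoped CompactlySupported ENNReal

variable {E : Type*} [TopologicalSpace E] [MeasurableSpace E] [BorelSpace E] (μ : Measure E)
  [IsFiniteMeasureOnCompacts μ]

theorem memLp_cc (f : C_c(E, ℝ)) (P : ℝ≥0∞) : MemLp f P μ :=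
  f.continuous.memLp_of_hasCompactSupport f.hasCompactSupport

theorem integral_abs_rpow_eq_lpNorm_rpow {p : ℝ} (hp : 0 < p) (f : C_c(E, ℝ)) :
    ∫ x, |f x| ^ p ∂μ = lpNorm f (.ofReal p) μ ^ p := by
  rw [lpNorm_eq_integral_norm_rpow_toReal (by simpa using hp) ENNReal.ofReal_ne_top
    (memLp_cc μ f 1).1, ENNReal.toReal_ofReal hp.le,
    Real.rpow_inv_rpow (integral_nonneg fun x => by positivity) hp.ne']
  rfl

/- Test the pairing bound on `V = ε • signedRpow (p - 1) ∘ ψ`, for which `⟨ψ, V⟩ = ε ∫ |ψ|ᵖ` and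
`∫ |V|^q = ε ^ q ∫ |ψ|ᵖ`, with `ε` so small that the last term is absorbed. -/
theorem exists_integral_rpow_le_of_l2Pairing_le {p q A : ℝ} (h : p.HolderConjugate q)
    (hA : 0 < A) : ∃ K > 0, ∀ (ψ : C_c(E, ℝ)) (Y : ℝ),
      (∀ V, |l2Pairing μ ψ V| ≤ A * (Y + ∫ x, |V x| ^ q ∂μ)) → ∫ x, |ψ x| ^ p ∂μ ≤ K * Y := by
  have hq : 0 < q - 1 := h.symm.sub_one_pos
  set ε : ℝ := (2 * A) ^ (-(q - 1)⁻¹) with hε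
  have hε0 : 0 < ε := by positivity
  have hεq : A * ε ^ q = ε / 2 := by
    have : ε ^ (q - 1) = (2 * A)⁻¹ := by
      rw [hε, ← Real.rpow_mul (by positivity), neg_mul, inv_mul_cancel₀ hq.ne', Real.rpow_neg_one]
    rw [← sub_add_cancel q 1, Real.rpow_add_one hε0.ne', this]
    field_simp
  refine ⟨2 * A / ε, by positivity, fun ψ Y hY => ?_⟩
  let Φ : C_c(E, ℝ) := ψ.compLeft ⟨_, continuous_signedRpow h.sub_one_pos⟩
  have hΦ (x : E) : Φ x = signedRpow (p - 1) (ψ x) :=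
    CompactlySupportedContinuousMap.compLeft_apply (signedRpow_zero _) ψ x
  have pairing : l2Pairing μ ψ (ε • Φ) = ε * ∫ x, |ψ x| ^ p ∂μ := by
    simp [l2Pairing_apply, hΦ, mul_signedRpow h.sub_one_pos]
  have power : ∫ x, |(ε • Φ) x| ^ q ∂μ = ε ^ q * ∫ x, |ψ x| ^ p ∂μ := by
    rw [← integral_const_mul]
    congr 1 with x
    rw [CompactlySupportedContinuousMap.smul_apply, smul_eq_mul, abs_mul, abs_of_pos hε0, hΦ,
      abs_signedRpow h.sub_one_pos, Real.mul_rpow hε0.le (by positivity),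
      ← Real.rpow_mul (abs_nonneg _), h.sub_one_mul_conj]
  have test := (le_abs_self _).trans (hY (ε • Φ))
  rw [pairing, power, mul_add, ← mul_assoc A, hεq] at test
  rw [div_mul_eq_mul_div, le_div_iff₀ hε0]
  linarith

variable [AddCommGroup E] [IsTopologicalAddGroup E] [μ.IsAddLeftInvariant]

theorem lpNorm_translateCc (v : E) (f : C_c(E, ℝ)) (P : ℝ≥0∞) :
    lpNorm (translateCc v f) P μ = lpNorm f P μ := by
  rw [← toReal_eLpNorm (memLp_cc μ _ P).1, ← toReal_eLpNorm (memLp_cc μ f P).1]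
  exact congrArg ENNReal.toReal (eLpNorm_comp_measurePreserving (memLp_cc μ f P).1
    (measurePreserving_add_right μ v))

theorem lpNorm_secondDiff_le (v : E) (f : C_c(E, ℝ)) {P : ℝ≥0∞} (hP : 1 ≤ P) :
    lpNorm (secondDiff v f) P μ ≤ 4 * lpNorm f P μ := by
  have coe : ⇑(secondDiff v f) = translateCc v f + translateCc (-v) f - (2 : ℝ) • ⇑f := by
    ext x
    simp [secondDiff_apply, sub_eq_add_neg]
  calc lpNorm (secondDiff v f) P μ
      ≤ lpNorm (translateCc v f) P μ + lpNorm (translateCc (-v) f) P μ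
        + lpNorm ((2 : ℝ) • ⇑f) P μ := by
        rw [coe]
        exact (lpNorm_sub_le ((memLp_cc μ _ P).add (memLp_cc μ _ P)) hP).trans
          (by gcongr; exact lpNorm_add_le (memLp_cc μ _ P) hP)
    _ = 4 * lpNorm f P μ := by
      rw [lpNorm_translateCc, lpNorm_translateCc, lpNorm_const_smul]
      norm_num
      ring

variable {ι : Type*} [Fintype ι] (v : ι → E)

theorem lpNorm_lazyWalk_le (f : C_c(E, ℝ)) {P : ℝ≥0∞} (hP : 1 ≤ P) :
    lpNorm (lazyWalk v f) P μ ≤ 2 * lpNorm f P μ := by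
  have coe : ⇑(lazyWalk v f)
      = ⇑f + (4 * Fintype.card ι : ℝ)⁻¹ • ∑ k, ⇑(secondDiff (v k) f) := by
    simp [lazyWalk]
  have sum : lpNorm (∑ k, ⇑(secondDiff (v k) f)) P μ
      ≤ 4 * Fintype.card ι * lpNorm f P μ := by
    refine (lpNorm_sum_le (fun k _ => memLp_cc μ _ P) hP).trans
      ((Finset.sum_le_card_nsmul _ _ _ fun k _ => lpNorm_secondDiff_le μ (v k) f hP).trans_eq ?_)
    rw [nsmul_eq_mul, Finset.card_univ]
    ring
  calc lpNorm (lazyWalk v f) P μ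
      ≤ lpNorm f P μ + (4 * Fintype.card ι : ℝ)⁻¹ * lpNorm (∑ k, ⇑(secondDiff (v k) f)) P μ := by
        rw [coe]
        refine (lpNorm_add_le (memLp_cc μ f P) hP).trans_eq ?_
        rw [lpNorm_const_smul, coe_nnnorm, Real.norm_of_nonneg (by positivity)]
    _ ≤ lpNorm f P μ + (4 * Fintype.card ι : ℝ)⁻¹ * (4 * Fintype.card ι * lpNorm f P μ) := by
        gcongr
    _ ≤ 2 * lpNorm f P μ := by
        rw [← mul_assoc, two_mul]
        gcongr
        exact mul_le_of_le_one_left lpNorm_nonneg inv_mul_le_one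

theorem lpNorm_sub_lazyWalk_sq_le (f : C_c(E, ℝ)) {P : ℝ≥0∞} (hP : 1 ≤ P) :
    lpNorm (f - (lazyWalk v ^ 2) f) P μ
      ≤ 3 * (4 * Fintype.card ι : ℝ)⁻¹ * lpNorm ⇑(∑ k, secondDiff (v k) f) P μ := by
  set g : C_c(E, ℝ) := ∑ k, secondDiff (v k) f
  set c : ℝ := (4 * Fintype.card ι : ℝ)⁻¹
  have hc : 0 ≤ c := by positivity
  have walk : lazyWalk v f = f + c • g := by simp [lazyWalk, g, c]
  have factor : ⇑(f - (lazyWalk v ^ 2) f) = -(c • (⇑g + ⇑(lazyWalk v g))) := by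
    rw [pow_two, Module.End.mul_apply, walk, map_add, map_smul, walk]
    ext x
    simp only [CompactlySupportedContinuousMap.sub_apply,
      CompactlySupportedContinuousMap.add_apply, CompactlySupportedContinuousMap.smul_apply,
      Pi.neg_apply, Pi.smul_apply, Pi.add_apply]
    module
  calc lpNorm (f - (lazyWalk v ^ 2) f) P μ = c * lpNorm (⇑g + ⇑(lazyWalk v g)) P μ := by
        rw [factor, lpNorm_neg, lpNorm_const_smul, coe_nnnorm, Real.norm_of_nonneg hc]
    _ ≤ c * (lpNorm g P μ + 2 * lpNorm g P μ) := by
        gcongr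
        exact (lpNorm_add_le (memLp_cc μ g P) hP).trans
          (by gcongr; exact lpNorm_lazyWalk_le μ v g hP)
    _ = 3 * c * lpNorm g P μ := by ring

theorem exists_lpNorm_secondDiff_le (ι : Type*) [Fintype ι] [Nonempty ι] {p : ℝ} (hp : 1 < p) :
    ∃ K > 0, ∀ (v : ι → E) (j : ι) (f : C_c(E, ℝ)), lpNorm (secondDiff (v j) f) (.ofReal p) μ
      ≤ K * lpNorm ⇑(∑ k, secondDiff (v k) f) (.ofReal p) μ := by
  have hpq := Real.HolderConjugate.conjExponent hp
  have : (0 : ℝ) < Fintype.card ι := by exact_mod_cast Fintype.card_pos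
  have hP : 1 ≤ ENNReal.ofReal p := ENNReal.one_le_ofReal.2 hp.le
  obtain ⟨C, hC, B, hB⟩ := exists_isBellmanFunction hpq
  obtain ⟨K, hK, absorb⟩ := exists_integral_rpow_le_of_l2Pairing_le (E := E) μ hpq
    (A := 8 * Fintype.card ι * C) (by positivity)
  refine ⟨K ^ p⁻¹ * (3 * (4 * Fintype.card ι : ℝ)⁻¹), by positivity, fun v j f => ?_⟩
  have power := absorb (secondDiff (v j) f) _ fun V =>
    (hB.abs_l2Pairing_secondDiff_le μ v j f V hpq.pos hpq.symm.pos).trans_eq (mul_assoc _ _ _).symm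
  rw [integral_abs_rpow_eq_lpNorm_rpow μ hpq.pos,
    integral_abs_rpow_eq_lpNorm_rpow μ hpq.pos] at power
  calc lpNorm (secondDiff (v j) f) (.ofReal p) μ
      ≤ K ^ p⁻¹ * lpNorm (f - (lazyWalk v ^ 2) f) (.ofReal p) μ := by
        rw [← Real.rpow_le_rpow_iff lpNorm_nonneg
            (mul_nonneg (by positivity) lpNorm_nonneg) hpq.pos,
          Real.mul_rpow (by positivity) lpNorm_nonneg, Real.rpow_inv_rpow hK.le hpq.ne_zero]
        exact power
    _ ≤ _ := by
        rw [mul_assoc]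
        gcongr
        exact lpNorm_sub_lazyWalk_sq_le μ v f hP

end DiscreteEstimate

section DirDeriv

open scoped ContDiff CompactlySupported

variable {E : Type*} [NormedAddCommGroup E] [NormedSpace ℝ E]

/-- The derivative of `f` in the direction `v`, as an operator on functions. Unlike `lineDeriv`, it
is linear in `v` for every `f`. -/
noncomputable def dirDeriv (v : E) (f : E → ℝ) : E → ℝ := fun x => fderiv ℝ f x v

theorem dirDeriv_add_left (v w : E) (f : E → ℝ) :
    dirDeriv (v + w) f = dirDeriv v f + dirDeriv w f := by
  ext x
  simp [dirDeriv]

theorem dirDeriv_sub_left (v w : E) (f : E → ℝ) :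
    dirDeriv (v - w) f = dirDeriv v f - dirDeriv w f := by
  ext x
  simp [dirDeriv]

theorem dirDeriv_smul_left (c : ℝ) (v : E) (f : E → ℝ) : dirDeriv (c • v) f = c • dirDeriv v f := by
  ext x
  simp [dirDeriv]

variable {f g : E → ℝ}

theorem dirDeriv_add (hf : Differentiable ℝ f) (hg : Differentiable ℝ g) (v : E) :
    dirDeriv v (f + g) = dirDeriv v f + dirDeriv v g := by
  ext x
  simp [dirDeriv, fderiv_add (hf x) (hg x)]

theorem dirDeriv_sub (hf : Differentiable ℝ f) (hg : Differentiable ℝ g) (v : E) :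
    dirDeriv v (f - g) = dirDeriv v f - dirDeriv v g := by
  ext x
  simp [dirDeriv, fderiv_sub (hf x) (hg x)]

theorem dirDeriv_const_smul (c : ℝ) (v : E) (f : E → ℝ) :
    dirDeriv v (c • f) = c • dirDeriv v f := by
  ext x
  simp [dirDeriv, fderiv_const_smul_field]

theorem dirDeriv_mul (hf : Differentiable ℝ f) (hg : Differentiable ℝ g) (v : E) :
    dirDeriv v (f * g) = f * dirDeriv v g + g * dirDeriv v f := by
  ext x
  simp [dirDeriv, fderiv_mul (hf x) (hg x)]

theorem dirDeriv_sum {κ : Type*} {f : κ → E → ℝ} (s : Finset κ)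
    (hf : ∀ k ∈ s, Differentiable ℝ (f k)) (v : E) :
    dirDeriv v (∑ k ∈ s, f k) = ∑ k ∈ s, dirDeriv v (f k) := by
  ext x
  simp [dirDeriv, fderiv_sum fun k hk => hf k hk x]

theorem contDiff_dirDeriv (hf : ContDiff ℝ ∞ f) (v : E) : ContDiff ℝ ∞ (dirDeriv v f) :=
  (hf.fderiv_right (m := ∞) (by simp)).clm_apply contDiff_const

theorem dirDeriv_comm (hf : ContDiff ℝ ∞ f) (v w : E) :
    dirDeriv v (dirDeriv w f) = dirDeriv w (dirDeriv v f) := by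
  ext x
  have hsymm : IsSymmSndFDerivAt ℝ f x := hf.contDiffAt.isSymmSndFDerivAt (by
    rw [minSmoothness_of_isRCLikeNormedField]
    exact WithTop.coe_le_coe.2 le_top)
  have hdiff : Differentiable ℝ (fderiv ℝ f) :=
    (hf.fderiv_right (m := ∞) (by simp)).differentiable (by simp)
  have iterated (a b : E) : dirDeriv a (dirDeriv b f) x = fderiv ℝ (fderiv ℝ f) x a b := by
    change fderiv ℝ (fun y => fderiv ℝ f y b) x a = _
    rw [fderiv_clm_apply (hdiff x) (differentiableAt_const b)]
    simp
  rw [iterated, iterated, hsymm v w]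

theorem dirDeriv_add_dirDeriv_add (hf : ContDiff ℝ ∞ f) (v w : E) :
    dirDeriv (v + w) (dirDeriv (v + w) f) = dirDeriv v (dirDeriv v f)
      + (2 : ℝ) • dirDeriv v (dirDeriv w f) + dirDeriv w (dirDeriv w f) := by
  have hdiff (u : E) := (contDiff_dirDeriv hf u).differentiable (by simp)
  rw [dirDeriv_add_left v w f, dirDeriv_add (hdiff v) (hdiff w), dirDeriv_add_left,
    dirDeriv_add_left, dirDeriv_comm hf w v]
  module

theorem dirDeriv_sub_dirDeriv_sub (hf : ContDiff ℝ ∞ f) (v w : E) :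
    dirDeriv (v - w) (dirDeriv (v - w) f) = dirDeriv v (dirDeriv v f)
      - (2 : ℝ) • dirDeriv v (dirDeriv w f) + dirDeriv w (dirDeriv w f) := by
  have hdiff (u : E) := (contDiff_dirDeriv hf u).differentiable (by simp)
  rw [dirDeriv_sub_left v w f, dirDeriv_sub (hdiff v) (hdiff w), dirDeriv_sub_left,
    dirDeriv_sub_left, dirDeriv_comm hf w v]
  module

theorem sum_dirDeriv_dirDeriv_add_sub {κ : Type*} [Fintype κ] (e : κ → E) (hf : ContDiff ℝ ∞ f) :
    ∑ k : κ × κ, dirDeriv (e k.1 + e k.2) (dirDeriv (e k.1 + e k.2) f)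
      + ∑ k : κ × κ, dirDeriv (e k.1 - e k.2) (dirDeriv (e k.1 - e k.2) f)
      = (4 * Fintype.card κ : ℝ) • ∑ k, dirDeriv (e k) (dirDeriv (e k) f) := by
  have parallelogram (k : κ × κ) : dirDeriv (e k.1 + e k.2) (dirDeriv (e k.1 + e k.2) f)
      + dirDeriv (e k.1 - e k.2) (dirDeriv (e k.1 - e k.2) f)
      = (2 : ℝ) • (dirDeriv (e k.1) (dirDeriv (e k.1) f)
        + dirDeriv (e k.2) (dirDeriv (e k.2) f)) := by
    rw [dirDeriv_add_dirDeriv_add hf, dirDeriv_sub_dirDeriv_sub hf]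
    module
  rw [← Finset.sum_add_distrib]
  simp_rw [parallelogram, Fintype.sum_prod_type, ← Finset.smul_sum, Finset.sum_add_distrib,
    Finset.sum_const, ← Finset.smul_sum, Finset.card_univ, ← Nat.cast_smul_eq_nsmul ℝ]
  module

theorem hasDerivAt_dirDeriv (hf : Differentiable ℝ f) (v x : E) (t : ℝ) :
    HasDerivAt (fun t : ℝ => f (x + t • v)) (dirDeriv v f (x + t • v)) t := by
  have line : HasDerivAt (fun t : ℝ => x + t • v) v t := by
    simpa using ((hasDerivAt_id t).smul_const v).const_add x
  exact (hf (x + t • v)).hasFDerivAt.comp_hasDerivAt t line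

theorem sub_sub_dirDeriv_eq_integral (hf : ContDiff ℝ ∞ f) (v x : E) :
    f (x + v) - f x - dirDeriv v f x
      = ∫ t in (0 : ℝ)..1, (1 - t) * dirDeriv v (dirDeriv v f) (x + t • v) := by
  have hf' := contDiff_dirDeriv hf v
  have hf'' := contDiff_dirDeriv hf' v
  have antideriv (t : ℝ) : HasDerivAt
      (fun t : ℝ => (1 - t) * dirDeriv v f (x + t • v) + f (x + t • v))
      ((1 - t) * dirDeriv v (dirDeriv v f) (x + t • v)) t := by
    refine ((((hasDerivAt_id t).const_sub 1).mul (hasDerivAt_dirDeriv (hf'.differentiable (by simp))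
      v x t)).add (hasDerivAt_dirDeriv (hf.differentiable (by simp)) v x t)).congr_deriv ?_
    simp
  have hcont : Continuous fun t : ℝ => (1 - t) * dirDeriv v (dirDeriv v f) (x + t • v) := by
    have := hf''.continuous
    fun_prop
  rw [intervalIntegral.integral_eq_sub_of_hasDerivAt (fun t _ => antideriv t)
    (hcont.intervalIntegrable 0 1)]
  simp
  ring

theorem abs_sub_sub_dirDeriv_sub_le (hf : ContDiff ℝ ∞ f) (v x : E) {c ε : ℝ}
    (h : ∀ t ∈ Set.Icc (0 : ℝ) 1, |dirDeriv v (dirDeriv v f) (x + t • v) - c| ≤ ε) :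
    |f (x + v) - f x - dirDeriv v f x - c / 2| ≤ ε := by
  have hcont := (contDiff_dirDeriv (contDiff_dirDeriv hf v) v).continuous
  have average : ∫ t in (0 : ℝ)..1, (1 - t) * c = c / 2 := by
    rw [intervalIntegral.integral_mul_const, intervalIntegral.integral_sub (by simp) (by simp)]
    norm_num
    ring
  have remainder : f (x + v) - f x - dirDeriv v f x - c / 2
      = ∫ t in (0 : ℝ)..1, (1 - t) * (dirDeriv v (dirDeriv v f) (x + t • v) - c) := by
    simp_rw [mul_sub]
    rw [intervalIntegral.integral_sub, ← sub_sub_dirDeriv_eq_integral hf, average]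
    all_goals exact Continuous.intervalIntegrable (by fun_prop) _ _
  rw [remainder, ← Real.norm_eq_abs]
  refine (intervalIntegral.norm_integral_le_of_norm_le_const (C := ε) fun t ht => ?_).trans_eq
    (by simp)
  rw [Set.uIoc_of_le zero_le_one] at ht
  rw [Real.norm_eq_abs, abs_mul, abs_of_nonneg (sub_nonneg.2 ht.2)]
  exact (mul_le_of_le_one_left (abs_nonneg _) (by linarith [ht.1])).trans (h t ⟨ht.1.le, ht.2⟩)

theorem abs_add_add_sub_sub_le (hf : ContDiff ℝ ∞ f) (v x : E) {c ε : ℝ}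
    (h : ∀ t ∈ Set.Icc (-1 : ℝ) 1, |dirDeriv v (dirDeriv v f) (x + t • v) - c| ≤ ε) :
    |f (x + v) + f (x - v) - 2 * f x - c| ≤ 2 * ε := by
  have forward := abs_sub_sub_dirDeriv_sub_le hf v x fun t ht => h t ⟨by linarith [ht.1], ht.2⟩
  have backward := abs_sub_sub_dirDeriv_sub_le hf (-v) x fun t ht => by
    rw [← neg_one_smul ℝ v, dirDeriv_smul_left, dirDeriv_smul_left, dirDeriv_const_smul, smul_smul,
      smul_smul]
    simpa using h (-t) ⟨by linarith [ht.2], by linarith [ht.1]⟩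
  have odd : dirDeriv (-v) f x = -dirDeriv v f x := by simp [dirDeriv]
  rw [odd, ← sub_eq_add_neg] at backward
  rw [abs_le] at *
  constructor <;> linarith [forward.1, forward.2, backward.1, backward.2]

/-- Membership in `C_c^∞(E)`. -/
structure IsTestFunction (f : E → ℝ) : Prop where
  contDiff : ContDiff ℝ ∞ f
  hasCompactSupport : HasCompactSupport f

namespace IsTestFunction

theorem differentiable (hf : IsTestFunction f) : Differentiable ℝ f :=
  hf.contDiff.differentiable (by simp)

theorem dirDeriv (hf : IsTestFunction f) (v : E) : IsTestFunction (dirDeriv v f) :=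
  ⟨contDiff_dirDeriv hf.contDiff v,
    (hf.hasCompactSupport.fderiv (𝕜 := ℝ)).comp_left (g := fun L : E →L[ℝ] ℝ => L v) (by simp)⟩

theorem mul_left (hf : IsTestFunction f) (hg : ContDiff ℝ ∞ g) : IsTestFunction (g * f) :=
  ⟨hg.mul hf.contDiff, hf.hasCompactSupport.mul_left⟩

/-- A test function as an element of `C_c(E, ℝ)`. -/
def toCc (hf : IsTestFunction f) : C_c(E, ℝ) :=
  ⟨⟨f, hf.contDiff.continuous⟩, hf.hasCompactSupport⟩

theorem coe_toCc (hf : IsTestFunction f) : ⇑hf.toCc = f := rfl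

end IsTestFunction

end DirDeriv

section LpLimits

open scoped CompactlySupported ENNReal NNReal Topology

theorem eLpNorm_integral_le_of_forall_le {Ω α : Type*} [MeasurableSpace Ω] [MeasurableSpace α]
    {P : Measure Ω} [IsProbabilityMeasure P] {μ : Measure α} [SFinite μ] {F : Ω → α → ℝ}
    (hF : Measurable F.uncurry) {p : ℝ≥0} (hp : 1 ≤ p) {A : ℝ≥0∞}
    (hA : ∀ᵐ ω ∂P, eLpNorm (F ω) p μ ≤ A) :
    eLpNorm (fun x => ∫ ω, F ω x ∂P) p μ ≤ A := by
  have hp0 : p ≠ 0 := (zero_lt_one.trans_le hp).ne'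
  have jensen (x : α) : ‖∫ ω, F ω x ∂P‖ₑ ^ (p : ℝ) ≤ ∫⁻ ω, ‖F ω x‖ₑ ^ (p : ℝ) ∂P := by
    rw [← eLpNorm_nnreal_pow_eq_lintegral hp0]
    gcongr
    calc ‖∫ ω, F ω x ∂P‖ₑ ≤ eLpNorm (fun ω => F ω x) 1 P :=
          (enorm_integral_le_lintegral_enorm _).trans_eq eLpNorm_one_eq_lintegral_enorm.symm
      _ ≤ eLpNorm (fun ω => F ω x) p P :=
          eLpNorm_le_eLpNorm_of_exponent_le (ENNReal.one_le_coe_iff.2 hp)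
            (hF.comp measurable_prodMk_right).aestronglyMeasurable
  rw [← ENNReal.rpow_le_rpow_iff (NNReal.coe_pos.2 (pos_iff_ne_zero.2 hp0)),
    eLpNorm_nnreal_pow_eq_lintegral hp0]
  calc ∫⁻ x, ‖∫ ω, F ω x ∂P‖ₑ ^ (p : ℝ) ∂μ
      ≤ ∫⁻ x, ∫⁻ ω, ‖F ω x‖ₑ ^ (p : ℝ) ∂P ∂μ := lintegral_mono jensen
    _ = ∫⁻ ω, ∫⁻ x, ‖F ω x‖ₑ ^ (p : ℝ) ∂μ ∂P :=
        lintegral_lintegral_swap ((hF.comp measurable_swap).enorm.pow_const _).aemeasurable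
    _ ≤ ∫⁻ _, A ^ (p : ℝ) ∂P := by
        refine lintegral_mono_ae (hA.mono fun ω hω => ?_)
        rw [← eLpNorm_nnreal_pow_eq_lintegral hp0]
        gcongr
    _ = A ^ (p : ℝ) := by simp

theorem tendsto_lpNorm_of_forall_abs_le {α E : Type*} [TopologicalSpace E] [T2Space E]
    [MeasurableSpace E] [BorelSpace E] (μ : Measure E) [IsFiniteMeasureOnCompacts μ]
    {l : Filter α} [l.IsCountablyGenerated] {G : α → C_c(E, ℝ)} {g : C_c(E, ℝ)} {p : ℝ} (hp : 0 < p)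
    {K : Set E} (hK : IsCompact K) {M : ℝ} (hGK : ∀ᶠ a in l, ∀ x ∉ K, G a x = 0)
    (hGM : ∀ᶠ a in l, ∀ x, |G a x| ≤ M)
    (hlim : ∀ x, Filter.Tendsto (fun a => G a x) l (𝓝 (g x))) :
    Filter.Tendsto (fun a => lpNorm (G a) (.ofReal p) μ) l (𝓝 (lpNorm g (.ofReal p) μ)) := by
  have root (f : C_c(E, ℝ)) : lpNorm f (.ofReal p) μ = (∫ x, |f x| ^ p ∂μ) ^ p⁻¹ := by
    rw [integral_abs_rpow_eq_lpNorm_rpow μ hp, Real.rpow_rpow_inv lpNorm_nonneg hp.ne']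
  simp_rw [root]
  refine Filter.Tendsto.rpow_const (tendsto_integral_filter_of_dominated_convergence
    (K.indicator fun _ => M ^ p) (.of_forall fun a => ?_) ?_ ?_ ?_) (.inr (by positivity))
  · exact ((G a).continuous.abs.rpow_const fun _ => .inr hp.le).aestronglyMeasurable
  · filter_upwards [hGK, hGM] with a haK haM
    refine .of_forall fun x => ?_
    rw [Real.norm_of_nonneg (by positivity)]
    by_cases hx : x ∈ K
    · rw [Set.indicator_of_mem hx]
      exact Real.rpow_le_rpow (abs_nonneg _) (haM x) hp.le
    · rw [Set.indicator_of_notMem hx, haK x hx, abs_zero, Real.zero_rpow hp.ne']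
  · exact (integrable_indicator_iff hK.measurableSet).2 (integrableOn_const hK.measure_lt_top.ne)
  · exact .of_forall fun x => (hlim x).abs.rpow_const (.inr hp.le)

end LpLimits

section SecondDerivativeEstimate

open scoped ContDiff CompactlySupported ENNReal NNReal Topology

variable {E : Type*} [NormedAddCommGroup E] [NormedSpace ℝ E] {f : E → ℝ}

/-- The difference quotient `s⁻² (f (x + s v) + f (x - s v) - 2 f x)` approximating the second
derivative of a test function in the direction `v`. -/
noncomputable def secondDiffQuot (hf : IsTestFunction f) (v : E) (s : ℝ) : C_c(E, ℝ) :=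
  (s ^ 2)⁻¹ • secondDiff (s • v) hf.toCc

theorem abs_secondDiffQuot_sub_le (hf : IsTestFunction f) (v x : E) {s : ℝ} (hs : 0 < s) {c ε : ℝ}
    (h : ∀ t ∈ Set.Icc (-s) s, |dirDeriv v (dirDeriv v f) (x + t • v) - c| ≤ ε) :
    |secondDiffQuot hf v s x - c| ≤ 2 * ε := by
  have scaled := abs_add_add_sub_sub_le hf.contDiff (s • v) x (c := s ^ 2 * c) (ε := s ^ 2 * ε)
    fun t ht => by
      have := h (t * s) ⟨by nlinarith [ht.1], by nlinarith [ht.2]⟩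
      rw [dirDeriv_smul_left, dirDeriv_smul_left, dirDeriv_const_smul, smul_smul, smul_smul,
        Pi.smul_apply, smul_eq_mul, ← pow_two, ← mul_sub, abs_mul, abs_of_pos (by positivity)]
      gcongr
  have factor : secondDiffQuot hf v s x - c
      = (s ^ 2)⁻¹ * (f (x + s • v) + f (x - s • v) - 2 * f x - s ^ 2 * c) := by
    rw [secondDiffQuot, CompactlySupportedContinuousMap.smul_apply, smul_eq_mul,
      secondDiff_apply, hf.coe_toCc, mul_sub _ _ (s ^ 2 * c), inv_mul_cancel_left₀ (by positivity)]
  rw [factor, abs_mul, abs_of_pos (by positivity), inv_mul_le_iff₀ (by positivity)]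
  linarith

theorem tendsto_secondDiffQuot (hf : IsTestFunction f) (v x : E) :
    Filter.Tendsto (fun s => secondDiffQuot hf v s x) (𝓝[>] 0)
      (𝓝 (dirDeriv v (dirDeriv v f) x)) := by
  rw [Metric.tendsto_nhds]
  intro ε hε
  have hcont : Continuous fun t : ℝ => dirDeriv v (dirDeriv v f) (x + t • v) :=
    ((hf.dirDeriv v).dirDeriv v).contDiff.continuous.comp (by fun_prop)
  obtain ⟨η, hη, close⟩ := Metric.continuous_iff.1 hcont 0 (ε / 4) (by positivity)
  filter_upwards [Ioo_mem_nhdsGT hη] with s hs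
  refine (abs_secondDiffQuot_sub_le hf v x hs.1 fun t ht => ?_).trans_lt
    (by linarith : 2 * (ε / 4) < ε)
  simpa [Real.dist_eq] using (close t (by
    rw [Real.dist_0_eq_abs]
    exact (abs_le.2 ht).trans_lt hs.2)).le

theorem exists_abs_secondDiffQuot_le (hf : IsTestFunction f) (v : E) :
    ∃ M, ∀ s > 0, ∀ x, |secondDiffQuot hf v s x| ≤ M := by
  have hf'' := (hf.dirDeriv v).dirDeriv v
  obtain ⟨M, hM⟩ := hf''.hasCompactSupport.exists_bound_of_continuous hf''.contDiff.continuous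
  exact ⟨2 * M, fun s hs x => by
    simpa using abs_secondDiffQuot_sub_le hf v x hs (c := 0) fun t _ => by simpa using hM _⟩

theorem secondDiffQuot_eq_zero (hf : IsTestFunction f) (v x : E) {s : ℝ} (hs : s ∈ Set.Ioc 0 1)
    (hx : x ∉ Metric.cthickening ‖v‖ (tsupport f)) : secondDiffQuot hf v s x = 0 := by
  have vanish (y : E) (hy : dist x y ≤ ‖v‖) : f y = 0 := by
    by_contra hne
    exact hx (Metric.mem_cthickening_of_dist_le x y _ _ (subset_tsupport f hne) hy)
  have hsv : ‖s • v‖ ≤ ‖v‖ := by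
    rw [norm_smul, Real.norm_of_nonneg hs.1.le]
    exact mul_le_of_le_one_left (norm_nonneg v) hs.2
  rw [secondDiffQuot, CompactlySupportedContinuousMap.smul_apply, secondDiff_apply, hf.coe_toCc,
    vanish _ (by simpa using hsv), vanish _ (by simpa using hsv), vanish x (by simp)]
  simp

variable [MeasurableSpace E] [BorelSpace E] (μ : Measure E) [IsFiniteMeasureOnCompacts μ]

theorem IsTestFunction.memLp (hf : IsTestFunction f) (P : ℝ≥0∞) : MemLp f P μ :=
  memLp_cc μ hf.toCc P

variable [FiniteDimensional ℝ E]

theorem tendsto_lpNorm_sum_secondDiffQuot (hf : IsTestFunction f) {ι : Type*} (S : Finset ι)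
    (v : ι → E) {p : ℝ} (hp : 0 < p) :
    Filter.Tendsto (fun s => lpNorm ⇑(∑ k ∈ S, secondDiffQuot hf (v k) s) (.ofReal p) μ) (𝓝[>] 0)
      (𝓝 (lpNorm (∑ k ∈ S, dirDeriv (v k) (dirDeriv (v k) f)) (.ofReal p) μ)) := by
  have : ProperSpace E := FiniteDimensional.proper_real E
  choose M hM using fun k => exists_abs_secondDiffQuot_le hf (v k)
  have coe : ⇑(∑ k ∈ S, ((hf.dirDeriv (v k)).dirDeriv (v k)).toCc)
      = ∑ k ∈ S, dirDeriv (v k) (dirDeriv (v k) f) := by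
    simp [IsTestFunction.coe_toCc]
  rw [← coe]
  refine tendsto_lpNorm_of_forall_abs_le μ hp (M := ∑ k ∈ S, M k)
    (S.isCompact_biUnion fun k _ => hf.hasCompactSupport.isCompact.cthickening (r := ‖v k‖))
    ?_ ?_ ?_
  · filter_upwards [Ioc_mem_nhdsGT one_pos] with s hs x hx
    rw [CompactlySupportedContinuousMap.sum_apply]
    exact Finset.sum_eq_zero fun k hk =>
      secondDiffQuot_eq_zero hf (v k) x hs fun h => hx (Set.mem_biUnion hk h)
  · filter_upwards [self_mem_nhdsWithin] with s hs x
    rw [CompactlySupportedContinuousMap.sum_apply]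
    exact (Finset.abs_sum_le_sum_abs _ _).trans (Finset.sum_le_sum fun k _ => hM k s hs x)
  · intro x
    simp_rw [CompactlySupportedContinuousMap.sum_apply]
    exact tendsto_finsetSum S fun k _ => tendsto_secondDiffQuot hf (v k) x

variable [μ.IsAddLeftInvariant]

theorem exists_lpNorm_dirDeriv_dirDeriv_self_le (ι : Type*) [Fintype ι] [Nonempty ι] {p : ℝ}
    (hp : 1 < p) : ∃ K > 0, ∀ (v : ι → E) (j : ι) (f : E → ℝ), IsTestFunction f →
      lpNorm (dirDeriv (v j) (dirDeriv (v j) f)) (.ofReal p) μ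
        ≤ K * lpNorm (∑ k, dirDeriv (v k) (dirDeriv (v k) f)) (.ofReal p) μ := by
  obtain ⟨K, hK, discrete⟩ := exists_lpNorm_secondDiff_le (E := E) μ ι hp
  have hp0 : 0 < p := zero_lt_one.trans hp
  refine ⟨K, hK, fun v j f hf => ?_⟩
  have left := tendsto_lpNorm_sum_secondDiffQuot μ hf {j} v hp0
  have right := tendsto_lpNorm_sum_secondDiffQuot μ hf Finset.univ v hp0
  rw [Finset.sum_singleton] at left
  refine le_of_tendsto_of_tendsto left (right.const_mul K) (.of_forall fun s => ?_)
  have scale (g : C_c(E, ℝ)) : lpNorm ⇑((s ^ 2)⁻¹ • g) (.ofReal p) μ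
      = (s ^ 2)⁻¹ * lpNorm g (.ofReal p) μ := by
    rw [CompactlySupportedContinuousMap.coe_smul, lpNorm_const_smul, coe_nnnorm,
      Real.norm_of_nonneg (by positivity)]
  simp only [Finset.sum_singleton, secondDiffQuot, ← Finset.smul_sum, scale]
  rw [mul_left_comm]
  gcongr
  exact discrete (fun k => s • v k) j hf.toCc

theorem lpNorm_sub_sub_dirDeriv_le (hf : IsTestFunction f) (v : E) {p : ℝ} (hp : 1 ≤ p) :
    lpNorm (fun x => f (x + v) - f x - dirDeriv v f x) (.ofReal p) μ
      ≤ lpNorm (dirDeriv v (dirDeriv v f)) (.ofReal p) μ := by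
  have : ProperSpace E := FiniteDimensional.proper_real E
  have hf'' := ((hf.dirDeriv v).dirDeriv v).memLp μ (.ofReal p)
  have hcont : Continuous fun x => f (x + v) - f x - dirDeriv v f x := by
    have := hf.contDiff.continuous
    have := (hf.dirDeriv v).contDiff.continuous
    fun_prop
  rw [← toReal_eLpNorm hcont.aestronglyMeasurable, ← toReal_eLpNorm hf''.1]
  refine ENNReal.toReal_mono hf''.2.ne ?_
  simp_rw [sub_sub_dirDeriv_eq_integral hf.contDiff, intervalIntegral.integral_of_le zero_le_one]
  have : IsProbabilityMeasure (volume.restrict (Set.Ioc (0 : ℝ) 1)) := ⟨by simp⟩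
  refine eLpNorm_integral_le_of_forall_le ?_ (Real.one_le_toNNReal.2 hp)
    (ae_restrict_of_forall_mem measurableSet_Ioc fun t ht => ?_)
  · have := ((hf.dirDeriv v).dirDeriv v).contDiff.continuous
    exact Continuous.measurable (by fun_prop)
  · refine (eLpNorm_mono fun x => ?_).trans_eq (eLpNorm_comp_measurePreserving hf''.1
      (measurePreserving_add_right μ (t • v)))
    rw [norm_mul, Real.norm_of_nonneg (sub_nonneg.2 ht.2)]
    exact mul_le_of_le_one_left (norm_nonneg _) (by linarith [ht.1])

theorem lpNorm_dirDeriv_le (hf : IsTestFunction f) (v : E) {p : ℝ} (hp : 1 ≤ p) :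
    lpNorm (dirDeriv v f) (.ofReal p) μ
      ≤ 2 * lpNorm f (.ofReal p) μ + lpNorm (dirDeriv v (dirDeriv v f)) (.ofReal p) μ := by
  have hP : 1 ≤ ENNReal.ofReal p := ENNReal.one_le_ofReal.2 hp
  have hf₀ := hf.memLp μ (.ofReal p)
  have hτ := memLp_cc μ (translateCc v hf.toCc) (.ofReal p)
  have split : dirDeriv v f = (⇑(translateCc v hf.toCc) - f)
      - fun x => f (x + v) - f x - dirDeriv v f x := by
    ext x
    simp [translateCc_apply, hf.coe_toCc]
  calc lpNorm (dirDeriv v f) (.ofReal p) μ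
      ≤ (lpNorm (translateCc v hf.toCc) (.ofReal p) μ + lpNorm f (.ofReal p) μ)
        + lpNorm (fun x => f (x + v) - f x - dirDeriv v f x) (.ofReal p) μ := by
        conv_lhs => rw [split]
        exact (lpNorm_sub_le (hτ.sub hf₀) hP).trans
          (by gcongr; exact lpNorm_sub_le hτ hP)
    _ ≤ _ := by
        rw [lpNorm_translateCc, hf.coe_toCc, ← two_mul]
        gcongr
        exact lpNorm_sub_sub_dirDeriv_le μ hf v hp

theorem lpNorm_dirDeriv_le_of_pos (hf : IsTestFunction f) (v : E) {p : ℝ} (hp : 1 ≤ p) {t : ℝ}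
    (ht : 0 < t) : lpNorm (dirDeriv v f) (.ofReal p) μ ≤ 2 / t * lpNorm f (.ofReal p) μ
      + t * lpNorm (dirDeriv v (dirDeriv v f)) (.ofReal p) μ := by
  have scaled := lpNorm_dirDeriv_le μ hf (t • v) hp
  rw [dirDeriv_smul_left, dirDeriv_smul_left, dirDeriv_const_smul, lpNorm_const_smul,
    lpNorm_const_smul, lpNorm_const_smul, coe_nnnorm, Real.norm_of_nonneg ht.le] at scaled
  rw [← mul_le_mul_iff_right₀ ht]
  calc t * lpNorm (dirDeriv v f) (.ofReal p) μ ≤ _ := scaled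
    _ = _ := by field_simp

theorem exists_lpNorm_dirDeriv_dirDeriv_le {κ : Type*} [Fintype κ] [Nonempty κ] {p : ℝ} (hp : 1 < p)
    (e : κ → E) : ∃ K > 0, ∀ (i j : κ) (f : E → ℝ), IsTestFunction f →
      lpNorm (dirDeriv (e i) (dirDeriv (e j) f)) (.ofReal p) μ
        ≤ K * lpNorm (∑ k, dirDeriv (e k) (dirDeriv (e k) f)) (.ofReal p) μ := by
  obtain ⟨K, hK, pure⟩ := exists_lpNorm_dirDeriv_dirDeriv_self_le μ (κ × κ ⊕ κ × κ) hp
  let v : κ × κ ⊕ κ × κ → E := Sum.elim (fun k => e k.1 + e k.2) fun k => e k.1 - e k.2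
  refine ⟨2 * Fintype.card κ * K, by positivity, fun i j f hf => ?_⟩
  let D (k : κ × κ ⊕ κ × κ) : E → ℝ := dirDeriv (v k) (dirDeriv (v k) f)
  have hD (k) : MemLp (D k) (.ofReal p) μ := ((hf.dirDeriv _).dirDeriv _).memLp μ _
  have bound (k) : lpNorm (D k) (.ofReal p) μ ≤ K * (4 * Fintype.card κ
      * lpNorm (∑ k, dirDeriv (e k) (dirDeriv (e k) f)) (.ofReal p) μ) := by
    refine (pure v k f hf).trans_eq ?_
    rw [Fintype.sum_sum_type]
    simp only [v, Sum.elim_inl, Sum.elim_inr]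
    rw [sum_dirDeriv_dirDeriv_add_sub e hf.contDiff, lpNorm_const_smul, coe_nnnorm,
      Real.norm_of_nonneg (by positivity)]
  have polarization : dirDeriv (e i) (dirDeriv (e j) f)
      = (4 : ℝ)⁻¹ • (D (.inl (i, j)) - D (.inr (i, j))) := by
    simp only [D, v, Sum.elim_inl, Sum.elim_inr]
    rw [dirDeriv_add_dirDeriv_add hf.contDiff, dirDeriv_sub_dirDeriv_sub hf.contDiff]
    module
  rw [polarization, lpNorm_const_smul, coe_nnnorm, Real.norm_of_nonneg (by positivity)]
  linarith [lpNorm_sub_le (g := D (.inr (i, j))) (hD (.inl (i, j))) (ENNReal.one_le_ofReal.2 hp.le),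
    bound (.inl (i, j)), bound (.inr (i, j))]

end SecondDerivativeEstimate

section WeightedEstimate

open scoped ContDiff ENNReal

theorem lpNorm_mul_le_mul_lpNorm_mul {α : Type*} [MeasurableSpace α] {μ : Measure α} {P : ℝ≥0∞}
    {σ ρ u : α → ℝ} {R : ℝ} (hR : 0 ≤ R) (hσ : ∀ x, |σ x| ≤ R * |ρ x|) (hu : MemLp (ρ * u) P μ) :
    lpNorm (σ * u) P μ ≤ R * lpNorm (ρ * u) P μ := by
  have dominated : lpNorm (σ * u) P μ ≤ lpNorm (R • |ρ * u|) P μ :=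
    lpNorm_mono_real (hu.abs.const_smul R) fun x => by
      simpa [abs_mul, mul_assoc] using mul_le_mul_of_nonneg_right (hσ x) (abs_nonneg (u x))
  rwa [lpNorm_const_smul, coe_nnnorm, Real.norm_of_nonneg hR, lpNorm_abs hu.1] at dominated

variable {E : Type*} [NormedAddCommGroup E] [NormedSpace ℝ E] {κ : Type*}

/-- A smooth weight `ρ` whose first and second derivatives along the directions `e i` are dominated
by `R |ρ|`. -/
structure IsAdmissibleWeight (e : κ → E) (R : ℝ) (ρ : E → ℝ) : Prop where
  pos : 0 < R
  contDiff : ContDiff ℝ ∞ ρ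
  abs_dirDeriv_le : ∀ i x, |dirDeriv (e i) ρ x| ≤ R * |ρ x|
  abs_dirDeriv_dirDeriv_le : ∀ i j x, |dirDeriv (e i) (dirDeriv (e j) ρ) x| ≤ R * |ρ x|

/-- The part of `∂_v ∂_w (ρ g)` in which the weight `ρ` is differentiated. -/
noncomputable def leibnizRemainder (v w : E) (ρ g : E → ℝ) : E → ℝ :=
  dirDeriv v ρ * dirDeriv w g + dirDeriv w ρ * dirDeriv v g + dirDeriv v (dirDeriv w ρ) * g

theorem dirDeriv_dirDeriv_mul {ρ g : E → ℝ} (hρ : ContDiff ℝ ∞ ρ) (hg : ContDiff ℝ ∞ g) (v w : E) :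
    dirDeriv v (dirDeriv w (ρ * g)) = ρ * dirDeriv v (dirDeriv w g) + leibnizRemainder v w ρ g := by
  have hρ₀ := hρ.differentiable (by simp)
  have hg₀ := hg.differentiable (by simp)
  have hρ₁ := (contDiff_dirDeriv hρ w).differentiable (by simp)
  have hg₁ := (contDiff_dirDeriv hg w).differentiable (by simp)
  rw [dirDeriv_mul hρ₀ hg₀, dirDeriv_add (hρ₀.mul hg₁) (hg₀.mul hρ₁), dirDeriv_mul hρ₀ hg₁,
    dirDeriv_mul hg₀ hρ₁, leibnizRemainder]
  ring

variable [MeasurableSpace E] [BorelSpace E] {μ : Measure E} [IsFiniteMeasureOnCompacts μ]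
  {e : κ → E} {R : ℝ} {ρ g : E → ℝ} {P : ℝ≥0∞}

theorem memLp_leibnizRemainder (hρ : ContDiff ℝ ∞ ρ) (hg : IsTestFunction g) (v w : E) :
    MemLp (leibnizRemainder v w ρ g) P μ :=
  ((((hg.dirDeriv w).mul_left (contDiff_dirDeriv hρ v)).memLp μ P).add
    (((hg.dirDeriv v).mul_left (contDiff_dirDeriv hρ w)).memLp μ P)).add
    ((hg.mul_left (contDiff_dirDeriv (contDiff_dirDeriv hρ w) v)).memLp μ P)

theorem lpNorm_leibnizRemainder_le (hP : 1 ≤ P) (hρ : IsAdmissibleWeight e R ρ)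
    (hg : IsTestFunction g) (i j : κ) :
    lpNorm (leibnizRemainder (e i) (e j) ρ g) P μ ≤ R * (lpNorm (ρ * dirDeriv (e i) g) P μ
      + lpNorm (ρ * dirDeriv (e j) g) P μ + lpNorm (ρ * g) P μ) := by
  have crossTerm (k l : κ) : MemLp (dirDeriv (e k) ρ * dirDeriv (e l) g) P μ :=
    ((hg.dirDeriv (e l)).mul_left (contDiff_dirDeriv hρ.contDiff (e k))).memLp μ P
  have lpNorm_crossTerm (k l : κ) : lpNorm (dirDeriv (e k) ρ * dirDeriv (e l) g) P μ
      ≤ R * lpNorm (ρ * dirDeriv (e l) g) P μ :=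
    lpNorm_mul_le_mul_lpNorm_mul hρ.pos.le (hρ.abs_dirDeriv_le k)
      (((hg.dirDeriv (e l)).mul_left hρ.contDiff).memLp μ P)
  calc lpNorm (leibnizRemainder (e i) (e j) ρ g) P μ
      ≤ lpNorm (dirDeriv (e i) ρ * dirDeriv (e j) g) P μ
        + lpNorm (dirDeriv (e j) ρ * dirDeriv (e i) g) P μ
        + lpNorm (dirDeriv (e i) (dirDeriv (e j) ρ) * g) P μ :=
        (lpNorm_add_le ((crossTerm i j).add (crossTerm j i)) hP).trans
          (by gcongr; exact lpNorm_add_le (crossTerm i j) hP)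
    _ ≤ R * lpNorm (ρ * dirDeriv (e j) g) P μ + R * lpNorm (ρ * dirDeriv (e i) g) P μ
        + R * lpNorm (ρ * g) P μ := by
        gcongr
        · exact lpNorm_crossTerm i j
        · exact lpNorm_crossTerm j i
        · exact lpNorm_mul_le_mul_lpNorm_mul hρ.pos.le (hρ.abs_dirDeriv_dirDeriv_le i j)
            ((hg.mul_left hρ.contDiff).memLp μ P)
    _ = _ := by ring

theorem lpNorm_mul_dirDeriv_dirDeriv_le (hP : 1 ≤ P) (hρ : ContDiff ℝ ∞ ρ) (hg : IsTestFunction g)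
    (v w : E) : lpNorm (ρ * dirDeriv v (dirDeriv w g)) P μ
      ≤ lpNorm (dirDeriv v (dirDeriv w (ρ * g))) P μ + lpNorm (leibnizRemainder v w ρ g) P μ := by
  rw [eq_sub_of_add_eq (dirDeriv_dirDeriv_mul hρ hg.contDiff v w).symm]
  exact lpNorm_sub_le ((((hg.mul_left hρ).dirDeriv w).dirDeriv v).memLp μ P) hP

theorem lpNorm_mul_dirDeriv_le [FiniteDimensional ℝ E] [μ.IsAddLeftInvariant] {p : ℝ} (hp : 1 ≤ p)
    (hρ : IsAdmissibleWeight e R ρ) (hg : IsTestFunction g) {t : ℝ} (ht : 0 < t) (i : κ) :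
    lpNorm (ρ * dirDeriv (e i) g) (.ofReal p) μ ≤ (2 / t + R) * lpNorm (ρ * g) (.ofReal p) μ
      + t * lpNorm (dirDeriv (e i) (dirDeriv (e i) (ρ * g))) (.ofReal p) μ := by
  have hρg := hg.mul_left hρ.contDiff
  have leibniz : ρ * dirDeriv (e i) g = dirDeriv (e i) (ρ * g) - dirDeriv (e i) ρ * g := by
    rw [dirDeriv_mul (hρ.contDiff.differentiable (by simp)) hg.differentiable]
    ring
  have triangle := lpNorm_sub_le (g := dirDeriv (e i) ρ * g)
    ((hρg.dirDeriv (e i)).memLp μ (.ofReal p)) (ENNReal.one_le_ofReal.2 hp)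
  rw [← leibniz] at triangle
  have lowerOrder := lpNorm_mul_le_mul_lpNorm_mul hρ.pos.le (hρ.abs_dirDeriv_le i)
    (hρg.memLp μ (.ofReal p))
  linarith [lpNorm_dirDeriv_le_of_pos μ hρg (e i) hp ht]

variable [Fintype κ]

theorem lpNorm_sum_dirDeriv_dirDeriv_mul_le (hP : 1 ≤ P) (hρ : IsAdmissibleWeight e R ρ)
    (hg : IsTestFunction g) : lpNorm (∑ k, dirDeriv (e k) (dirDeriv (e k) (ρ * g))) P μ
      ≤ lpNorm (ρ * ∑ k, dirDeriv (e k) (dirDeriv (e k) g)) P μ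
        + R * (2 * ∑ k, lpNorm (ρ * dirDeriv (e k) g) P μ
          + Fintype.card κ * lpNorm (ρ * g) P μ) := by
  have main : MemLp (ρ * ∑ k, dirDeriv (e k) (dirDeriv (e k) g)) P μ := by
    rw [Finset.mul_sum]
    exact memLp_finsetSum' _ fun k _ =>
      (((hg.dirDeriv (e k)).dirDeriv (e k)).mul_left hρ.contDiff).memLp μ P
  have errors : lpNorm (∑ k, leibnizRemainder (e k) (e k) ρ g) P μ
      ≤ ∑ k, R * (lpNorm (ρ * dirDeriv (e k) g) P μ + lpNorm (ρ * dirDeriv (e k) g) P μ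
        + lpNorm (ρ * g) P μ) :=
    (lpNorm_sum_le (fun k _ => memLp_leibnizRemainder hρ.contDiff hg (e k) (e k)) hP).trans
      (Finset.sum_le_sum fun k _ => lpNorm_leibnizRemainder_le hP hρ hg k k)
  simp_rw [dirDeriv_dirDeriv_mul hρ.contDiff hg.contDiff, Finset.sum_add_distrib, ← Finset.mul_sum]
  refine (lpNorm_add_le main hP).trans (add_le_add_right (errors.trans_eq ?_) _)
  simp only [← Finset.mul_sum, Finset.sum_add_distrib, Finset.sum_const, Finset.card_univ,
    nsmul_eq_mul]
  ring

variable (μ) [FiniteDimensional ℝ E] [μ.IsAddLeftInvariant] [Nonempty κ] {p : ℝ}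

theorem exists_lpNorm_dirDeriv_dirDeriv_mul_le (hp : 1 < p) (hρ : IsAdmissibleWeight e R ρ) :
    ∃ Z > 0, ∀ g, IsTestFunction g → ∀ i j,
      lpNorm (dirDeriv (e i) (dirDeriv (e j) (ρ * g))) (.ofReal p) μ
        ≤ Z * (lpNorm (ρ * ∑ k, dirDeriv (e k) (dirDeriv (e k) g)) (.ofReal p) μ
          + R * (2 * ∑ k, lpNorm (ρ * dirDeriv (e k) g) (.ofReal p) μ
            + Fintype.card κ * lpNorm (ρ * g) (.ofReal p) μ)) := by
  obtain ⟨Z, hZ, unweighted⟩ := exists_lpNorm_dirDeriv_dirDeriv_le μ hp e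
  refine ⟨Z, hZ, fun g hg i j => (unweighted i j _ (hg.mul_left hρ.contDiff)).trans ?_⟩
  gcongr
  exact lpNorm_sum_dirDeriv_dirDeriv_mul_le (ENNReal.one_le_ofReal.2 hp.le) hρ hg

theorem exists_sum_lpNorm_mul_dirDeriv_le (hp : 1 < p) (hρ : IsAdmissibleWeight e R ρ) :
    ∃ K > 0, ∀ g, IsTestFunction g → ∑ k, lpNorm (ρ * dirDeriv (e k) g) (.ofReal p) μ
      ≤ K * (lpNorm (ρ * ∑ k, dirDeriv (e k) (dirDeriv (e k) g)) (.ofReal p) μ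
        + lpNorm (ρ * g) (.ofReal p) μ) := by
  obtain ⟨Z, hZ, second⟩ := exists_lpNorm_dirDeriv_dirDeriv_mul_le μ hp hρ
  have hR := hρ.pos
  let n : ℝ := Fintype.card κ
  have hn : 0 < n := Nat.cast_pos.2 Fintype.card_pos
  -- this `t` gives the first-order terms on the right a total coefficient of `1/2`
  let t : ℝ := (4 * n * Z * R)⁻¹
  have ht : 0 < t := by positivity
  have absorb : n * (t * Z) * (2 * R) = 1 / 2 := by
    simp only [t]
    field_simp
    norm_num
  refine ⟨2 * n * (2 / t + R + t * Z * (1 + R * n)), by positivity, fun g hg => ?_⟩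
  set L := lpNorm (ρ * ∑ k, dirDeriv (e k) (dirDeriv (e k) g)) (.ofReal p) μ
  set N₀ := lpNorm (ρ * g) (.ofReal p) μ
  set N₁ := ∑ k, lpNorm (ρ * dirDeriv (e k) g) (.ofReal p) μ
  have hL : 0 ≤ L := lpNorm_nonneg
  have hN₀ : 0 ≤ N₀ := lpNorm_nonneg
  have single (k : κ) : lpNorm (ρ * dirDeriv (e k) g) (.ofReal p) μ
      ≤ (2 / t + R) * N₀ + t * (Z * (L + R * (2 * N₁ + n * N₀))) := by
    refine (lpNorm_mul_dirDeriv_le hp.le hρ hg ht k).trans ?_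
    gcongr
    exact second g hg k k
  have total : N₁ ≤ n * ((2 / t + R) * N₀ + t * Z * (L + R * n * N₀)) + N₁ / 2 :=
    calc N₁ ≤ n * ((2 / t + R) * N₀ + t * (Z * (L + R * (2 * N₁ + n * N₀)))) := by
          refine (Finset.sum_le_sum fun k _ => single k).trans_eq ?_
          rw [Finset.sum_const, Finset.card_univ, nsmul_eq_mul]
      _ = n * ((2 / t + R) * N₀ + t * Z * (L + R * n * N₀)) + n * (t * Z) * (2 * R) * N₁ := by ring
      _ = _ := by rw [absorb]; ring
  calc N₁ ≤ 2 * n * ((2 / t + R) * N₀ + t * Z * (L + R * n * N₀)) := by linarith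
    _ ≤ 2 * n * ((2 / t + R) * (L + N₀) + t * Z * ((L + N₀) + R * n * (L + N₀))) := by
      gcongr <;> linarith
    _ = _ := by ring

theorem exists_lpNorm_mul_dirDeriv_dirDeriv_le (hp : 1 < p) (hρ : IsAdmissibleWeight e R ρ) :
    ∃ K > 0, ∀ g, IsTestFunction g → ∀ i j,
      lpNorm (ρ * dirDeriv (e i) (dirDeriv (e j) g)) (.ofReal p) μ
        ≤ K * (lpNorm (ρ * ∑ k, dirDeriv (e k) (dirDeriv (e k) g)) (.ofReal p) μ
          + lpNorm (ρ * g) (.ofReal p) μ) := by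
  obtain ⟨Z, hZ, second⟩ := exists_lpNorm_dirDeriv_dirDeriv_mul_le μ hp hρ
  obtain ⟨K, hK, firstOrder⟩ := exists_sum_lpNorm_mul_dirDeriv_le μ hp hρ
  have hP : 1 ≤ ENNReal.ofReal p := ENNReal.one_le_ofReal.2 hp.le
  have hR := hρ.pos
  let n : ℝ := Fintype.card κ
  refine ⟨Z * (1 + R * (2 * K + n)) + R * (K + K + 1), by positivity, fun g hg i j => ?_⟩
  have first := firstOrder g hg
  set L := lpNorm (ρ * ∑ k, dirDeriv (e k) (dirDeriv (e k) g)) (.ofReal p) μ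
  set N₀ := lpNorm (ρ * g) (.ofReal p) μ
  have hL : 0 ≤ L := lpNorm_nonneg
  have hN₀ : 0 ≤ N₀ := lpNorm_nonneg
  have first_single (k : κ) : lpNorm (ρ * dirDeriv (e k) g) (.ofReal p) μ ≤ K * (L + N₀) :=
    (Finset.single_le_sum (f := fun k => lpNorm (ρ * dirDeriv (e k) g) (.ofReal p) μ)
      (fun _ _ => lpNorm_nonneg) (Finset.mem_univ k)).trans first
  calc lpNorm (ρ * dirDeriv (e i) (dirDeriv (e j) g)) (.ofReal p) μ
      ≤ Z * (L + R * (2 * (K * (L + N₀)) + n * N₀)) + R * (K * (L + N₀) + K * (L + N₀) + N₀) := by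
        refine (lpNorm_mul_dirDeriv_dirDeriv_le hP hρ.contDiff hg (e i) (e j)).trans ?_
        gcongr
        · exact (second g hg i j).trans (by gcongr)
        · exact (lpNorm_leibnizRemainder_le hP hρ hg i j).trans
            (by gcongr <;> exact first_single _)
    _ ≤ Z * (L + N₀ + R * (2 * (K * (L + N₀)) + n * (L + N₀)))
        + R * (K * (L + N₀) + K * (L + N₀) + (L + N₀)) := by
        gcongr <;> linarith
    _ = _ := by ring

end WeightedEstimate

section BracketWeight

open scoped ContDiff RealInnerProductSpace

variable {E : Type*} [NormedAddCommGroup E]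

/-- The weight `⟨x⟩^(2a)`, written without the square root so that it is visibly smooth. -/
noncomputable def bracketWeight (a : ℝ) (x : E) : ℝ := (1 + ‖x‖ ^ 2) ^ a

theorem bracketWeight_pos (a : ℝ) (x : E) : 0 < bracketWeight a x := by
  unfold bracketWeight
  positivity

theorem bracketWeight_sub_one_mul (a : ℝ) (x : E) :
    bracketWeight (a - 1) x * (1 + ‖x‖ ^ 2) = bracketWeight a x := by
  rw [bracketWeight, Real.rpow_sub_one (by positivity), div_mul_cancel₀ _ (by positivity),
    bracketWeight]

variable [InnerProductSpace ℝ E]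

theorem contDiff_bracketWeight (a : ℝ) : ContDiff ℝ ∞ (bracketWeight (E := E) a) :=
  (contDiff_const.add (contDiff_norm_sq ℝ)).rpow_const_of_ne fun x => by positivity

theorem dirDeriv_bracketWeight (a : ℝ) (v : E) :
    dirDeriv v (bracketWeight a) = (2 * a) • (bracketWeight (a - 1) * fun x => ⟪v, x⟫) := by
  ext x
  have base : HasFDerivAt (fun x : E => 1 + ‖x‖ ^ 2) (2 • innerSL ℝ x) x :=
    (hasStrictFDerivAt_norm_sq x).hasFDerivAt.const_add 1
  have power : HasFDerivAt (bracketWeight a) _ x := base.rpow_const (p := a) (.inl (by positivity))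
  rw [dirDeriv, power.fderiv]
  simp [bracketWeight, real_inner_comm]
  ring

theorem dirDeriv_inner (v w : E) : dirDeriv w (fun x => ⟪v, x⟫) = fun _ => ⟪v, w⟫ := by
  ext x
  exact congrArg (· w) (innerSL ℝ v).fderiv

theorem two_mul_abs_inner_le {v : E} (hv : ‖v‖ ≤ 1) (x : E) : 2 * |⟪v, x⟫| ≤ 1 + ‖x‖ ^ 2 := by
  have cauchySchwarz : |⟪v, x⟫| ≤ ‖x‖ :=
    (abs_real_inner_le_norm v x).trans (mul_le_of_le_one_left (norm_nonneg x) hv)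
  nlinarith [sq_nonneg (‖x‖ - 1)]

theorem abs_dirDeriv_bracketWeight_le (a : ℝ) {v : E} (hv : ‖v‖ ≤ 1) (x : E) :
    |dirDeriv v (bracketWeight a) x| ≤ |a| * bracketWeight a x := by
  have hpos := bracketWeight_pos (a - 1) x
  calc |dirDeriv v (bracketWeight a) x|
      = |a| * (bracketWeight (a - 1) x * (2 * |⟪v, x⟫|)) := by
        simp only [dirDeriv_bracketWeight, Pi.smul_apply, Pi.mul_apply, smul_eq_mul, abs_mul,
          abs_two, abs_of_pos hpos]
        ring
    _ ≤ |a| * bracketWeight a x := by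
        rw [← bracketWeight_sub_one_mul a x]
        gcongr
        exact two_mul_abs_inner_le hv x

theorem abs_dirDeriv_dirDeriv_bracketWeight_le (a : ℝ) {v w : E} (hv : ‖v‖ ≤ 1) (hw : ‖w‖ ≤ 1)
    (x : E) : |dirDeriv w (dirDeriv v (bracketWeight a)) x|
      ≤ |a| * (|a - 1| + 2) * bracketWeight a x := by
  have hpos := bracketWeight_pos (a - 1) x
  have product : dirDeriv w (dirDeriv v (bracketWeight a)) x
      = a * (bracketWeight (a - 1) x * (2 * ⟪v, w⟫)
        + 2 * ⟪v, x⟫ * dirDeriv w (bracketWeight (a - 1)) x) := by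
    rw [dirDeriv_bracketWeight, dirDeriv_const_smul, dirDeriv_mul
      ((contDiff_bracketWeight _).differentiable (by simp)) (g := fun x => ⟪v, x⟫)
      (innerSL ℝ v).differentiable, dirDeriv_inner]
    simp only [Pi.smul_apply, Pi.add_apply, Pi.mul_apply, smul_eq_mul]
    ring
  have directions : |⟪v, w⟫| ≤ 1 :=
    (abs_real_inner_le_norm v w).trans (mul_le_one₀ hv (norm_nonneg w) hw)
  have monotone : bracketWeight (a - 1) x ≤ bracketWeight a x := by
    rw [← bracketWeight_sub_one_mul a x]
    exact le_mul_of_one_le_right hpos.le (by nlinarith [sq_nonneg ‖x‖])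
  calc |dirDeriv w (dirDeriv v (bracketWeight a)) x|
      ≤ |a| * (bracketWeight (a - 1) x * (2 * |⟪v, w⟫|)
        + 2 * |⟪v, x⟫| * |dirDeriv w (bracketWeight (a - 1)) x|) := by
        rw [product, abs_mul]
        gcongr
        refine (abs_add_le _ _).trans_eq ?_
        simp only [abs_mul, abs_two, abs_of_pos hpos]
    _ ≤ |a| * (bracketWeight a x * (2 * 1)
        + (1 + ‖x‖ ^ 2) * (|a - 1| * bracketWeight (a - 1) x)) := by
        gcongr
        · exact (bracketWeight_pos a x).le
        · exact two_mul_abs_inner_le hv x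
        · exact abs_dirDeriv_bracketWeight_le _ hw x
    _ = _ := by
        rw [← bracketWeight_sub_one_mul a x]
        ring

theorem isAdmissibleWeight_bracketWeight {κ : Type*} {e : κ → E} (he : ∀ i, ‖e i‖ ≤ 1) (a : ℝ) :
    IsAdmissibleWeight e (|a| * (|a - 1| + 2) + 1) (bracketWeight a) where
  pos := by positivity
  contDiff := contDiff_bracketWeight a
  abs_dirDeriv_le i x := by
    have hpos := bracketWeight_pos a x
    rw [abs_of_pos hpos]
    refine (abs_dirDeriv_bracketWeight_le a (he i) x).trans (mul_le_mul_of_nonneg_right ?_ hpos.le)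
    nlinarith [abs_nonneg a, abs_nonneg (a - 1), mul_nonneg (abs_nonneg a) (abs_nonneg (a - 1))]
  abs_dirDeriv_dirDeriv_le i j x := by
    have hpos := bracketWeight_pos a x
    rw [abs_of_pos hpos]
    refine (abs_dirDeriv_dirDeriv_bracketWeight_le a (he j) (he i) x).trans ?_
    gcongr
    exact le_add_of_nonneg_right zero_le_one

end BracketWeight

section MultiIndex

open scoped ContDiff

variable {d : ℕ} {f : EuclideanSpace ℝ (Fin d) → ℝ}

theorem pderiv'_eq_dirDeriv (i : Fin d) (f : EuclideanSpace ℝ (Fin d) → ℝ) :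
    pderiv' i f = dirDeriv (EuclideanSpace.single i 1) f := rfl

theorem lap_eq_sum (f : EuclideanSpace ℝ (Fin d) → ℝ) : lap f = ∑ i, pderiv' i (pderiv' i f) := by
  ext x
  simp [lap]

theorem IsTestFunction.pderiv' (hf : IsTestFunction f) (i : Fin d) : IsTestFunction (pderiv' i f) :=
  hf.dirDeriv _

theorem IsTestFunction.iterate_pderiv' (hf : IsTestFunction f) (i : Fin d) (n : ℕ) :
    IsTestFunction ((_root_.pderiv' i)^[n] f) :=
  Function.Iterate.rec IsTestFunction hf (fun _ hg => hg.pderiv' i) n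

theorem pderiv'_comm (hf : IsTestFunction f) (i j : Fin d) :
    pderiv' i (pderiv' j f) = pderiv' j (pderiv' i f) :=
  dirDeriv_comm hf.contDiff _ _

theorem pderiv'_lap (hf : IsTestFunction f) (i : Fin d) :
    pderiv' i (lap f) = lap (pderiv' i f) := by
  rw [lap_eq_sum, lap_eq_sum, pderiv'_eq_dirDeriv,
    dirDeriv_sum _ fun k _ => ((hf.pderiv' k).pderiv' k).differentiable]
  refine Finset.sum_congr rfl fun k _ => ?_
  rw [← pderiv'_eq_dirDeriv, pderiv'_comm (hf.pderiv' k), pderiv'_comm hf]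

/-- The derivative `∂^α` taken only in the coordinates listed in `l`; the multi-index derivative
`mderiv α` is the case `l = List.finRange d`, and general `l` allow induction. -/
noncomputable def listDeriv (l : List (Fin d)) (α : Fin d → ℕ)
    (f : EuclideanSpace ℝ (Fin d) → ℝ) : EuclideanSpace ℝ (Fin d) → ℝ :=
  l.foldr (fun i g => (pderiv' i)^[α i] g) f

theorem listDeriv_cons (i : Fin d) (l : List (Fin d)) (α : Fin d → ℕ)
    (f : EuclideanSpace ℝ (Fin d) → ℝ) :
    listDeriv (i :: l) α f = (pderiv' i)^[α i] (listDeriv l α f) := rfl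

theorem IsTestFunction.listDeriv (hf : IsTestFunction f) (l : List (Fin d)) (α : Fin d → ℕ) :
    IsTestFunction (listDeriv l α f) := by
  induction l with
  | nil => exact hf
  | cons i l ih => exact ih.iterate_pderiv' i (α i)

theorem iterate_pderiv'_apply_comm
    {T : (EuclideanSpace ℝ (Fin d) → ℝ) → EuclideanSpace ℝ (Fin d) → ℝ}
    (hT : ∀ i f, IsTestFunction f → pderiv' i (T f) = T (pderiv' i f)) (hf : IsTestFunction f)
    (i : Fin d) (n : ℕ) : (pderiv' i)^[n] (T f) = T ((pderiv' i)^[n] f) := by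
  induction n with
  | zero => rfl
  | succ n ih =>
    rw [Function.iterate_succ_apply', Function.iterate_succ_apply', ih,
      hT i _ (hf.iterate_pderiv' i n)]

theorem listDeriv_apply_comm
    {T : (EuclideanSpace ℝ (Fin d) → ℝ) → EuclideanSpace ℝ (Fin d) → ℝ}
    (hT : ∀ i f, IsTestFunction f → pderiv' i (T f) = T (pderiv' i f)) (hf : IsTestFunction f)
    (l : List (Fin d)) (α : Fin d → ℕ) : listDeriv l α (T f) = T (listDeriv l α f) := by
  induction l with
  | nil => rfl
  | cons i l ih =>
    rw [listDeriv_cons, listDeriv_cons, ih, iterate_pderiv'_apply_comm hT (hf.listDeriv l α)]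

theorem listDeriv_add_single_of_notMem {l : List (Fin d)} {j : Fin d} (hj : j ∉ l)
    (β : Fin d → ℕ) (f : EuclideanSpace ℝ (Fin d) → ℝ) :
    listDeriv l (β + Pi.single j 1) f = listDeriv l β f := by
  induction l with
  | nil => rfl
  | cons i l ih =>
    rw [List.mem_cons, not_or] at hj
    rw [listDeriv_cons, listDeriv_cons, ih hj.2, Pi.add_apply, Pi.single_eq_of_ne' hj.1, add_zero]

theorem listDeriv_add_single_of_mem (hf : IsTestFunction f) {l : List (Fin d)} (hl : l.Nodup)
    {j : Fin d} (hj : j ∈ l) (β : Fin d → ℕ) :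
    listDeriv l (β + Pi.single j 1) f = pderiv' j (listDeriv l β f) := by
  induction l with
  | nil => exact absurd hj List.not_mem_nil
  | cons i l ih =>
    rw [List.nodup_cons] at hl
    rw [listDeriv_cons, listDeriv_cons, Pi.add_apply]
    obtain rfl | hij := eq_or_ne i j
    · rw [listDeriv_add_single_of_notMem hl.1, Pi.single_eq_same, Function.iterate_succ_apply']
    · rw [ih hl.2 (List.mem_of_ne_of_mem hij.symm hj), Pi.single_eq_of_ne hij, add_zero,
        iterate_pderiv'_apply_comm (fun k _ hg => pderiv'_comm hg k j) (hf.listDeriv l β)]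

theorem IsTestFunction.mderiv (hf : IsTestFunction f) (α : Fin d → ℕ) :
    IsTestFunction (mderiv α f) :=
  hf.listDeriv _ α

theorem mderiv_lap (hf : IsTestFunction f) (α : Fin d → ℕ) :
    mderiv α (lap f) = lap (mderiv α f) :=
  listDeriv_apply_comm (fun i _ hg => pderiv'_lap hg i) hf _ α

theorem mderiv_add_single (hf : IsTestFunction f) (β : Fin d → ℕ) (j : Fin d) :
    mderiv (β + Pi.single j 1) f = pderiv' j (mderiv β f) :=
  listDeriv_add_single_of_mem hf (List.nodup_finRange d) (List.mem_finRange j) β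

theorem exists_eq_add_single_of_sum_eq_succ {ι : Type*} [Fintype ι] [DecidableEq ι] {α : ι → ℕ}
    {n : ℕ} (hα : ∑ i, α i = n + 1) :
    ∃ (j : ι) (β : ι → ℕ), α = β + Pi.single j 1 ∧ ∑ i, β i = n := by
  obtain ⟨j, -, hj⟩ : ∃ j ∈ Finset.univ, α j ≠ 0 :=
    Finset.exists_ne_zero_of_sum_ne_zero (by omega)
  have single_le : Pi.single j 1 ≤ α :=
    update_le_iff.2 ⟨Nat.one_le_iff_ne_zero.2 hj, fun _ _ => Nat.zero_le _⟩
  have split : α = α - Pi.single j 1 + Pi.single j 1 := (tsub_add_cancel_of_le single_le).symm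
  refine ⟨j, α - Pi.single j 1, split, Nat.succ_injective ?_⟩
  rw [split] at hα
  simpa [Finset.sum_add_distrib] using hα

end MultiIndex

section WeightedSobolev

open scoped ContDiff

variable {d : ℕ}

theorem jb_rpow_eq_bracketWeight (δ : ℝ) (x : EuclideanSpace ℝ (Fin d)) :
    jb x ^ δ = bracketWeight (δ / 2) x := by
  rw [jb, Real.sqrt_eq_rpow, ← Real.rpow_mul (by positivity), one_div_mul_eq_div, bracketWeight]

theorem wLp_eq_lpNorm {f : EuclideanSpace ℝ (Fin d) → ℝ} (hf : Continuous f) (p δ : ℝ) :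
    wLp p δ f = lpNorm (bracketWeight (δ / 2) * f) (.ofReal p) volume := by
  rw [← toReal_eLpNorm ((contDiff_bracketWeight _).continuous.mul hf).aestronglyMeasurable, wLp]
  simp_rw [jb_rpow_eq_bracketWeight]
  rfl

variable {F : Type*} [NormedAddCommGroup F] [NormedSpace ℝ F]

theorem wLp_nonneg (p δ : ℝ) (f : EuclideanSpace ℝ (Fin d) → F) : 0 ≤ wLp p δ f :=
  ENNReal.toReal_nonneg

theorem Hnorm_nonneg (m : ℕ) (p δ : ℝ) (f : EuclideanSpace ℝ (Fin d) → F) : 0 ≤ Hnorm d m p δ f :=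
  Finset.sum_nonneg fun _ _ => wLp_nonneg p δ _

theorem wLp_mderiv_le_Hnorm {m : ℕ} {β : Fin d → ℕ} (hβ : ∑ i, β i ≤ m) (p δ : ℝ)
    (f : EuclideanSpace ℝ (Fin d) → F) : wLp p δ (mderiv β f) ≤ Hnorm d m p δ f := by
  have hlt (i : Fin d) : β i < m + 1 :=
    Nat.lt_succ_of_le ((Finset.single_le_sum (by simp) (Finset.mem_univ i)).trans hβ)
  exact Finset.single_le_sum (f := fun α : Fin d → Fin (m + 1) =>
    wLp p δ (mderiv (fun i => (α i : ℕ)) f)) (fun _ _ => wLp_nonneg p δ _)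
    (a := fun i => ⟨β i, hlt i⟩) (by simpa using hβ)

theorem exists_wLp_pderiv'_le [NeZero d] {p : ℝ} (hp : 1 < p) (δ : ℝ) :
    ∃ K > 0, ∀ g : EuclideanSpace ℝ (Fin d) → ℝ, IsTestFunction g →
      (∀ i, wLp p δ (pderiv' i g) ≤ K * (wLp p δ (lap g) + wLp p δ g)) ∧
      ∀ i j, wLp p δ (pderiv' i (pderiv' j g)) ≤ K * (wLp p δ (lap g) + wLp p δ g) := by
  have hρ := isAdmissibleWeight_bracketWeight
    (e := fun i : Fin d => EuclideanSpace.single i (1 : ℝ)) (fun i => by simp) (δ / 2)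
  obtain ⟨K₁, hK₁, first⟩ := exists_sum_lpNorm_mul_dirDeriv_le volume hp hρ
  obtain ⟨K₂, -, second⟩ := exists_lpNorm_mul_dirDeriv_dirDeriv_le volume hp hρ
  refine ⟨max K₁ K₂, lt_max_of_lt_left hK₁, fun g hg => ?_⟩
  have hg' (i) := hg.pderiv' i
  have hg'' (i j) := (hg' j).pderiv' i
  have hlap : Continuous (lap g) :=
    continuous_finsetSum _ fun k _ => (hg'' k k).contDiff.continuous
  have hR : 0 ≤ wLp p δ (lap g) + wLp p δ g := add_nonneg (wLp_nonneg p δ _) (wLp_nonneg p δ _)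
  have firstSum : ∑ k, wLp p δ (pderiv' k g) ≤ K₁ * (wLp p δ (lap g) + wLp p δ g) := by
    simp_rw [wLp_eq_lpNorm hlap, wLp_eq_lpNorm hg.contDiff.continuous,
      wLp_eq_lpNorm (hg' _).contDiff.continuous, lap_eq_sum]
    exact first g hg
  refine ⟨fun i => ?_, fun i j => ?_⟩
  · refine (Finset.single_le_sum (f := fun k => wLp p δ (pderiv' k g))
      (fun _ _ => wLp_nonneg p δ _) (Finset.mem_univ i)).trans (firstSum.trans ?_)
    gcongr
    exact le_max_left _ _
  · refine le_trans ?_ (mul_le_mul_of_nonneg_right (le_max_right K₁ K₂) hR)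
    rw [wLp_eq_lpNorm hlap, wLp_eq_lpNorm hg.contDiff.continuous,
      wLp_eq_lpNorm (hg'' i j).contDiff.continuous, lap_eq_sum]
    exact second g hg i j

theorem exists_wLp_mderiv_le [NeZero d] {p : ℝ} (hp : 1 < p) (m : ℕ) (δ : ℝ) :
    ∃ K > 0, ∀ g : EuclideanSpace ℝ (Fin d) → ℝ, IsTestFunction g →
      ∀ α : Fin d → ℕ, ∑ i, α i ≤ m + 2 →
        wLp p δ (mderiv α g) ≤ K * (Hnorm d m p δ (lap g) + Hnorm d m p δ g) := by
  obtain ⟨K, hK, base⟩ := exists_wLp_pderiv'_le (d := d) hp δ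
  refine ⟨max K 1, lt_max_of_lt_left hK, fun g hg α hα => ?_⟩
  have lower {β : Fin d → ℕ} (hβ : ∑ i, β i ≤ m) :
      wLp p δ (lap (mderiv β g)) + wLp p δ (mderiv β g)
        ≤ Hnorm d m p δ (lap g) + Hnorm d m p δ g := by
    rw [← mderiv_lap hg]
    exact add_le_add (wLp_mderiv_le_Hnorm hβ p δ _) (wLp_mderiv_le_Hnorm hβ p δ _)
  have scale {β : Fin d → ℕ} (hβ : ∑ i, β i ≤ m) {a : ℝ}
      (ha : a ≤ K * (wLp p δ (lap (mderiv β g)) + wLp p δ (mderiv β g))) :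
      a ≤ max K 1 * (Hnorm d m p δ (lap g) + Hnorm d m p δ g) := by
    refine ha.trans (mul_le_mul (le_max_left _ _) (lower hβ) (add_nonneg ?_ ?_) (by positivity)) <;>
      exact wLp_nonneg p δ _
  obtain hαm | hαm | hαm : ∑ i, α i ≤ m ∨ ∑ i, α i = m + 1 ∨ ∑ i, α i = m + 1 + 1 := by omega
  · calc wLp p δ (mderiv α g) ≤ 1 * (Hnorm d m p δ (lap g) + Hnorm d m p δ g) := by
          rw [one_mul]
          exact (le_add_of_nonneg_left (wLp_nonneg p δ _)).trans (lower hαm)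
      _ ≤ _ := mul_le_mul_of_nonneg_right (le_max_right _ _)
          (add_nonneg (Hnorm_nonneg m p δ _) (Hnorm_nonneg m p δ _))
  · obtain ⟨i, β, rfl, hβ⟩ := exists_eq_add_single_of_sum_eq_succ hαm
    rw [mderiv_add_single hg]
    exact scale hβ.le ((base _ (hg.mderiv β)).1 i)
  · obtain ⟨i, β, rfl, hβ⟩ := exists_eq_add_single_of_sum_eq_succ hαm
    obtain ⟨j, γ, rfl, hγ⟩ := exists_eq_add_single_of_sum_eq_succ hβ
    rw [mderiv_add_single hg, mderiv_add_single hg]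
    exact scale hγ.le ((base _ (hg.mderiv γ)).2 i j)

end WeightedSobolev

/-- Higher-order elliptic a priori estimate:
`‖g‖_{H^{m+2,p}_δ} ≤ C (‖Δg‖_{H^{m,p}_δ} + ‖g‖_{H^{m,p}_δ})` for `g ∈ C_c^∞(ℝ^d)`. -/
theorem stmt9 (d : ℕ) (hd : 1 ≤ d) (p : ℝ) (hp : 1 < p) (m : ℕ) (δ : ℝ) :
    ∃ C : ℝ, 0 < C ∧ ∀ g : EuclideanSpace ℝ (Fin d) → ℝ,
      ContDiff ℝ (⊤ : ℕ∞) g → HasCompactSupport g →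
        Hnorm d (m + 2) p δ g ≤ C * (Hnorm d m p δ (lap g) + Hnorm d m p δ g) := by
  have : NeZero d := ⟨by omega⟩
  obtain ⟨K, hK, bound⟩ := exists_wLp_mderiv_le (d := d) hp m δ
  let indices := Finset.univ.filter fun α : Fin d → Fin (m + 2 + 1) => ∑ i, (α i : ℕ) ≤ m + 2
  have hindices : 0 < (indices.card : ℝ) :=
    Nat.cast_pos.2 (Finset.card_pos.2 ⟨0, by simp [indices]⟩)
  refine ⟨indices.card * K, by positivity, fun g hg hsupp => ?_⟩
  calc Hnorm d (m + 2) p δ g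
      ≤ indices.card • (K * (Hnorm d m p δ (lap g) + Hnorm d m p δ g)) :=
        Finset.sum_le_card_nsmul _ _ _ fun α hα =>
          bound g ⟨hg, hsupp⟩ _ (Finset.mem_filter.1 hα).2
    _ = indices.card * K * (Hnorm d m p δ (lap g) + Hnorm d m p δ g) := by
        rw [nsmul_eq_mul, mul_assoc]
end

section
/- Let X be a real Banach space and let S : [0, ∞) → (X →L X) be a family of bounded linear operators with S(0) = id, S(t + s) = S(t) ∘ S(s) for all t, s ≥ 0, such that for every v ∈ X the map t ↦ S(t)v is continuous on [0, ∞), and such that there exist constants C > 0, ω > 0 with ‖S(t)v‖ ≤ C e^{ωt} ‖v‖ for all v ∈ X and t ≥ 0. Let T > 0 and let F : [0, T] × X → X be continuous and satisfy ‖F(t, u) − F(t, v)‖ ≤ L ‖u − v‖ for all t ∈ [0, T] and u, v ∈ X, for some constant L > 0. Then for every u₀ ∈ X there exists a unique continuous u : [0, T] → X satisfying u(t) = S(t)u₀ + ∫₀^t S(t − s) F(s, u(s)) ds for all t ∈ [0, T]. -/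
open MeasureTheory intervalIntegral

/-!
The equation is a Volterra equation `u(t) = g(t) + ∫ₐᵗ k(t, s, u(s)) ds` with kernel
`k(t, s, x) = S(t - s) F(s, x)`. By the uniform boundedness principle, the operators `S(t)` with
`t ∈ [0, T]` are bounded by a common constant, so `k` is continuous and is Lipschitz in `x` with
some constant `K` independent of `(t, s)`. By induction, the `n`-th iterate of the operator on the
right-hand side is then Lipschitz on `C([a, b], E)` with constant `(K (b - a))ⁿ / n!`. It is a
contraction for large `n`, so the operator itself has a unique fixed point.
-/

section

open Set Function
open scoped NNReal

theorem existsUnique_isFixedPt_of_contractingWith_iterate {α : Type*} [MetricSpace α]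
    [CompleteSpace α] [Nonempty α] {f : α → α} {K : ℝ≥0} {n : ℕ}
    (hf : ContractingWith K f^[n]) : ∃! x, IsFixedPt f x :=
  ⟨hf.fixedPoint, hf.isFixedPt_fixedPoint_iterate,
    fun _ hx => hf.fixedPoint_unique (hx.iterate n)⟩

theorem mul_integral_mul_sub_pow_div_factorial (c a t : ℝ) (n : ℕ) :
    c * ∫ s in a..t, (c * (s - a)) ^ n / n.factorial =
      (c * (t - a)) ^ (n + 1) / (n + 1).factorial := by
  have h : ∫ s in a..t, (s - a) ^ n = (t - a) ^ (n + 1) / (n + 1) := by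
    rw [integral_comp_sub_right (fun s => s ^ n), integral_pow, sub_self,
      zero_pow n.succ_ne_zero, sub_zero]
  simp_rw [mul_pow, mul_div_right_comm, intervalIntegral.integral_const_mul, h,
    Nat.factorial_succ]
  push_cast
  field_simp
  ring

section IsVolterraLipschitz

variable {E : Type*} {a b : ℝ} {hab : a ≤ b} {K : ℝ≥0}

/-- A self-map `Φ` of `C([a, b], E)` is Volterra–Lipschitz if the distance of two of its values at
time `t` is controlled by the integral up to time `t` of the distance of the arguments. The
arguments are composed with `projIcc` since the integral is over `ℝ`. -/
def IsVolterraLipschitz [PseudoMetricSpace E] (hab : a ≤ b) (K : ℝ≥0)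
    (Φ : C(Icc a b, E) → C(Icc a b, E)) : Prop :=
  ∀ u v, ∀ t : Icc a b, dist (Φ u t) (Φ v t) ≤
    K * ∫ s in a..t, dist (u (projIcc a b hab s)) (v (projIcc a b hab s))

theorem IsVolterraLipschitz.dist_iterate_apply_le [PseudoMetricSpace E]
    {Φ : C(Icc a b, E) → C(Icc a b, E)} (hΦ : IsVolterraLipschitz hab K Φ)
    (u v : C(Icc a b, E)) (n : ℕ) (t : Icc a b) :
    dist (Φ^[n] u t) (Φ^[n] v t) ≤ (K * (t - a)) ^ n / n.factorial * dist u v := by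
  induction n generalizing t with
  | zero => simpa using ContinuousMap.dist_apply_le_dist t
  | succ n ih =>
    have ih' : ∀ s ∈ Icc a (t : ℝ),
        dist (Φ^[n] u (projIcc a b hab s)) (Φ^[n] v (projIcc a b hab s)) ≤
          (K * (s - a)) ^ n / n.factorial * dist u v := fun s hs => by
      simpa only [projIcc_of_mem hab ⟨hs.1, hs.2.trans t.2.2⟩] using ih (projIcc a b hab s)
    rw [iterate_succ_apply', iterate_succ_apply']
    calc dist (Φ (Φ^[n] u) t) (Φ (Φ^[n] v) t)
        ≤ K * ∫ s in a..t,
            dist (Φ^[n] u (projIcc a b hab s)) (Φ^[n] v (projIcc a b hab s)) := hΦ _ _ t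
      _ ≤ K * ∫ s in a..t, (K * (s - a)) ^ n / n.factorial * dist u v := by
          gcongr
          refine intervalIntegral.integral_mono_on t.2.1 ?_ ?_ ih' <;>
            exact Continuous.intervalIntegrable (by fun_prop) _ _
      _ = (K * (t - a)) ^ (n + 1) / (n + 1).factorial * dist u v := by
          rw [intervalIntegral.integral_mul_const, ← mul_assoc,
            mul_integral_mul_sub_pow_div_factorial]

theorem IsVolterraLipschitz.exists_contractingWith_iterate [MetricSpace E]
    {Φ : C(Icc a b, E) → C(Icc a b, E)} (hΦ : IsVolterraLipschitz hab K Φ) :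
    ∃ n, ContractingWith (1 / 2) Φ^[n] := by
  obtain ⟨n, hn⟩ : ∃ n : ℕ, (K * (b - a)) ^ n / n.factorial < 1 / 2 :=
    ((FloorSemiring.tendsto_pow_div_factorial_atTop (K * (b - a))).eventually_lt_const
      one_half_pos).exists
  refine ⟨n, NNReal.half_lt_self one_ne_zero, .of_dist_le_mul fun u v => ?_⟩
  refine (ContinuousMap.dist_le (by positivity)).2 fun t => ?_
  have hta : 0 ≤ (t : ℝ) - a := sub_nonneg.2 t.2.1
  calc dist (Φ^[n] u t) (Φ^[n] v t)
      ≤ (K * (t - a)) ^ n / n.factorial * dist u v := hΦ.dist_iterate_apply_le u v n t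
    _ ≤ (K * (b - a)) ^ n / n.factorial * dist u v := by gcongr; exact t.2.2
    _ ≤ ((1 / 2 : ℝ≥0) : ℝ) * dist u v := by gcongr; simpa using hn.le

theorem IsVolterraLipschitz.existsUnique_isFixedPt [MetricSpace E] [CompleteSpace E] [Nonempty E]
    {Φ : C(Icc a b, E) → C(Icc a b, E)} (hΦ : IsVolterraLipschitz hab K Φ) :
    ∃! u, IsFixedPt Φ u :=
  have : Nonempty C(Icc a b, E) := ⟨.const _ (Classical.arbitrary E)⟩
  let ⟨_, hn⟩ := hΦ.exists_contractingWith_iterate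
  existsUnique_isFixedPt_of_contractingWith_iterate hn

end IsVolterraLipschitz

section Volterra

/-- The domain `a ≤ s ≤ t ≤ b` of a Volterra kernel, as a set of pairs `(t, s)`. -/
def volterraTriangle (a b : ℝ) : Set (ℝ × ℝ) :=
  {p | a ≤ p.2 ∧ p.2 ≤ p.1 ∧ p.1 ≤ b}

theorem continuousOn_volterraTriangle_comp {E G : Type*} [TopologicalSpace E] [TopologicalSpace G]
    {a b : ℝ} {k : ℝ → ℝ → E → G} {u : ℝ → E}
    (hk : ContinuousOn (fun p : (ℝ × ℝ) × E => k p.1.1 p.1.2 p.2) (volterraTriangle a b ×ˢ univ))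
    (hu : ContinuousOn u (Icc a b)) :
    ContinuousOn (uncurry fun t s => k t s (u s)) (volterraTriangle a b) :=
  have hu' : ContinuousOn (fun p : ℝ × ℝ => u p.2) (volterraTriangle a b) :=
    hu.comp continuousOn_snd fun _ hp => ⟨hp.1, hp.2.1.trans hp.2.2⟩
  hk.comp (continuousOn_id.prodMk hu') fun _ hp => ⟨hp, mem_univ _⟩

theorem intervalIntegrable_of_continuousOn_volterraTriangle {E : Type*} [NormedAddCommGroup E]
    {a b t : ℝ} {κ : ℝ → ℝ → E} (hκ : ContinuousOn (uncurry κ) (volterraTriangle a b))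
    (ht : t ∈ Icc a b) : IntervalIntegrable (κ t) volume a t :=
  ContinuousOn.intervalIntegrable_of_Icc ht.1 <|
    hκ.comp (Continuous.prodMk_right t).continuousOn fun _ hs => ⟨hs.1, hs.2, ht.2⟩

variable {E : Type*} [NormedAddCommGroup E] [NormedSpace ℝ E] {a b : ℝ}

theorem continuousOn_integral_of_continuousOn_volterraTriangle {κ : ℝ → ℝ → E}
    (hκ : ContinuousOn (uncurry κ) (volterraTriangle a b)) :
    ContinuousOn (fun t => ∫ s in a..t, κ t s) (Icc a b) := by
  rcases lt_or_ge b a with hba | hab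
  · simp only [Icc_eq_empty hba.not_ge, continuousOn_empty]
  -- The retraction `(t, s) ↦ (t', s')` of the plane onto the triangle makes the kernel continuous.
  let t' : ℝ → ℝ := fun t => projIcc a b hab t
  let s' : ℝ → ℝ → ℝ := fun t s => max a (min s (t' t))
  have ht' : Continuous t' := continuous_subtype_val.comp continuous_projIcc
  have hmem : ∀ t s, (t' t, s' t s) ∈ volterraTriangle a b := fun t s =>
    ⟨le_max_left _ _, max_le (projIcc a b hab t).2.1 (min_le_right _ _),
      (projIcc a b hab t).2.2⟩
  have hcont : Continuous (uncurry fun t s => κ (t' t) (s' t s)) :=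
    hκ.comp_continuous (f := fun p : ℝ × ℝ => (t' p.1, s' p.1 p.2)) (by fun_prop)
      fun p => hmem p.1 p.2
  refine (continuous_parametric_intervalIntegral_of_continuous hcont
    continuous_id).continuousOn.congr fun t ht => integral_congr fun s hs => ?_
  rw [uIcc_of_le ht.1] at hs
  simp only [t', s', projIcc_of_mem hab ht, min_eq_left hs.2, max_eq_right hs.1]

/-- `u` is a continuous solution on `[a, b]` of the nonlinear Volterra integral equation of the
second kind with forcing term `g` and kernel `k`. -/
structure IsVolterraSolution (a b : ℝ) (g : ℝ → E) (k : ℝ → ℝ → E → E) (u : ℝ → E) : Prop where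
  continuousOn : ContinuousOn u (Icc a b)
  eq_add_integral : ∀ t ∈ Icc a b, u t = g t + ∫ s in a..t, k t s (u s)

variable {g u : ℝ → E} {k : ℝ → ℝ → E → E} {K : ℝ≥0}

/-- The operator on `C([a, b], E)` whose fixed points are the solutions of the Volterra equation
with forcing term `g` and kernel `k`. The argument is extended to `ℝ` by constants. -/
noncomputable def volterraOperator (hab : a ≤ b) (hg : ContinuousOn g (Icc a b))
    (hk : ContinuousOn (fun p : (ℝ × ℝ) × E => k p.1.1 p.1.2 p.2) (volterraTriangle a b ×ˢ univ))
    (v : C(Icc a b, E)) : C(Icc a b, E) where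
  toFun t := g t + ∫ s in a..t, k t s (IccExtend hab v s)
  continuous_toFun := continuousOn_iff_continuous_domRestrict.1 <|
    hg.add <| continuousOn_integral_of_continuousOn_volterraTriangle <|
      continuousOn_volterraTriangle_comp hk v.continuous.Icc_extend'.continuousOn

variable (hab : a ≤ b) (hg : ContinuousOn g (Icc a b))
  (hk : ContinuousOn (fun p : (ℝ × ℝ) × E => k p.1.1 p.1.2 p.2) (volterraTriangle a b ×ˢ univ))

theorem isVolterraLipschitz_volterraOperator
    (hlip : ∀ p ∈ volterraTriangle a b, LipschitzWith K (k p.1 p.2)) :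
    IsVolterraLipschitz hab K (volterraOperator hab hg hk) := by
  intro u v t
  have hint : ∀ w : C(Icc a b, E),
      IntervalIntegrable (fun s => k t s (IccExtend hab w s)) volume a t := fun w =>
    intervalIntegrable_of_continuousOn_volterraTriangle
      (continuousOn_volterraTriangle_comp hk w.continuous.Icc_extend'.continuousOn) t.2
  calc dist (volterraOperator hab hg hk u t) (volterraOperator hab hg hk v t)
      = ‖∫ s in a..t, (k t s (IccExtend hab u s) - k t s (IccExtend hab v s))‖ := by
        rw [intervalIntegral.integral_sub (hint u) (hint v), ← dist_eq_norm]
        exact dist_add_left _ _ _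
    _ ≤ ∫ s in a..t, K * dist (IccExtend hab u s) (IccExtend hab v s) := by
        refine norm_integral_le_of_norm_le t.2.1 (.of_forall fun s hs => ?_) ?_
        · rw [← dist_eq_norm]
          exact (hlip (t, s) ⟨hs.1.le, hs.2, t.2.2⟩).dist_le_mul _ _
        · exact Continuous.intervalIntegrable
            (continuous_const.mul <| u.continuous.Icc_extend'.dist v.continuous.Icc_extend') _ _
    _ = K * ∫ s in a..t, dist (u (projIcc a b hab s)) (v (projIcc a b hab s)) :=
        intervalIntegral.integral_const_mul _ _

theorem isVolterraSolution_iff_isFixedPt {v : C(Icc a b, E)} (huv : ∀ t : Icc a b, u t = v t) :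
    IsVolterraSolution a b g k u ↔ IsFixedPt (volterraOperator hab hg hk) v := by
  have hext : EqOn u (IccExtend hab v) (Icc a b) := fun t ht => by
    rw [IccExtend_of_mem hab v ht, ← huv]
  have happly : ∀ t : Icc a b,
      volterraOperator hab hg hk v t = g t + ∫ s in a..t, k t s (u s) := fun t => by
    refine congrArg (g t + ·) (integral_congr fun s hs => ?_)
    rw [uIcc_of_le t.2.1] at hs
    simp only [hext ⟨hs.1, hs.2.trans t.2.2⟩]
  constructor
  · intro hu
    ext t
    rw [happly, ← hu.eq_add_integral t t.2, huv]
  · intro hv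
    refine ⟨v.continuous.Icc_extend'.continuousOn.congr hext, fun t ht => ?_⟩
    rw [huv ⟨t, ht⟩, ← happly ⟨t, ht⟩, hv.eq]

theorem exists_isVolterraSolution_and_eqOn [CompleteSpace E] (hab : a ≤ b)
    (hg : ContinuousOn g (Icc a b))
    (hk : ContinuousOn (fun p : (ℝ × ℝ) × E => k p.1.1 p.1.2 p.2) (volterraTriangle a b ×ˢ univ))
    (hlip : ∀ p ∈ volterraTriangle a b, LipschitzWith K (k p.1 p.2)) :
    ∃ u, IsVolterraSolution a b g k u ∧
      ∀ u', IsVolterraSolution a b g k u' → EqOn u' u (Icc a b) := by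
  obtain ⟨v, hv, hv_unique⟩ :=
    (isVolterraLipschitz_volterraOperator hab hg hk hlip).existsUnique_isFixedPt
  refine ⟨IccExtend hab v,
    (isVolterraSolution_iff_isFixedPt hab hg hk fun t => IccExtend_val hab v t).2 hv,
    fun u' hu' t ht => ?_⟩
  let v' : C(Icc a b, E) := ⟨(Icc a b).domRestrict u', hu'.continuousOn.domRestrict⟩
  have hv' : v' = v :=
    hv_unique v' ((isVolterraSolution_iff_isFixedPt hab hg hk fun _ => rfl).1 hu')
  rw [IccExtend_of_mem hab v ht, ← hv']
  rfl

end Volterra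

section StronglyContinuous

variable {α 𝕜 E G : Type*} [TopologicalSpace α] [NontriviallyNormedField 𝕜]
  [NormedAddCommGroup E] [NormedSpace 𝕜 E] [CompleteSpace E]
  [NormedAddCommGroup G] [NormedSpace 𝕜 G] {A : α → E →L[𝕜] G} {s : Set α}

theorem exists_lipschitzWith_of_isCompact_of_continuousOn_apply (hs : IsCompact s)
    (hA : ∀ x, ContinuousOn (fun t => A t x) s) : ∃ M, ∀ t ∈ s, LipschitzWith M (A t) := by
  obtain ⟨M, hM⟩ : ∃ M, ∀ t : s, ‖A t‖ ≤ M := banach_steinhaus fun x =>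
    (hs.exists_bound_of_continuousOn (hA x)).imp fun _ h t => h t t.2
  exact ⟨M.toNNReal, fun t ht => (A t).lipschitz.weaken <|
    NNReal.le_toNNReal_of_coe_le (hM ⟨t, ht⟩)⟩

theorem continuousOn_uncurry_of_isCompact_of_continuousOn_apply (hs : IsCompact s)
    (hA : ∀ x, ContinuousOn (fun t => A t x) s) :
    ContinuousOn (fun p : α × E => A p.1 p.2) (s ×ˢ univ) :=
  let ⟨M, hM⟩ := exists_lipschitzWith_of_isCompact_of_continuousOn_apply hs hA
  continuousOn_prod_of_continuousOn_lipschitzOnWith' _ M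
    (fun t ht => (hM t ht).lipschitzOnWith) fun x _ => hA x

end StronglyContinuous

theorem stmt15_general {X Y : Type*} [NormedAddCommGroup X] [NormedSpace ℝ X] [CompleteSpace X]
    [NormedAddCommGroup Y] [NormedSpace ℝ Y] [CompleteSpace Y]
    {S : ℝ → X →L[ℝ] Y} {F : ℝ → Y → X} {g : ℝ → Y} {T : ℝ} {L : ℝ≥0} (hT : 0 ≤ T)
    (hS : ∀ x, ContinuousOn (fun t => S t x) (Icc 0 T)) (hg : ContinuousOn g (Icc 0 T))
    (hF : ContinuousOn (fun q : ℝ × Y => F q.1 q.2) (Icc 0 T ×ˢ univ))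
    (hF_lip : ∀ t ∈ Icc 0 T, LipschitzWith L (F t)) :
    ∃ u : ℝ → Y,
      (ContinuousOn u (Icc 0 T) ∧
        ∀ t ∈ Icc 0 T, u t = g t + ∫ s in (0 : ℝ)..t, S (t - s) (F s (u s))) ∧
      ∀ u' : ℝ → Y, ContinuousOn u' (Icc 0 T) →
        (∀ t ∈ Icc 0 T, u' t = g t + ∫ s in (0 : ℝ)..t, S (t - s) (F s (u' s))) →
        ∀ t ∈ Icc 0 T, u' t = u t := by
  obtain ⟨M, hM⟩ := exists_lipschitzWith_of_isCompact_of_continuousOn_apply isCompact_Icc hS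
  have hs : ∀ p ∈ volterraTriangle 0 T, p.2 ∈ Icc 0 T := fun p hp => ⟨hp.1, hp.2.1.trans hp.2.2⟩
  have hts : ∀ p ∈ volterraTriangle 0 T, p.1 - p.2 ∈ Icc 0 T := fun p hp =>
    ⟨sub_nonneg.2 hp.2.1, (sub_le_self _ hp.1).trans hp.2.2⟩
  have hk : ContinuousOn (fun p : (ℝ × ℝ) × Y => S (p.1.1 - p.1.2) (F p.1.2 p.2))
      (volterraTriangle 0 T ×ˢ univ) := by
    have hF' : ContinuousOn (fun p : (ℝ × ℝ) × Y => F p.1.2 p.2) (volterraTriangle 0 T ×ˢ univ) :=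
      hF.comp (f := fun p : (ℝ × ℝ) × Y => (p.1.2, p.2)) (by fun_prop)
        fun p hp => ⟨hs p.1 hp.1, mem_univ _⟩
    exact (continuousOn_uncurry_of_isCompact_of_continuousOn_apply isCompact_Icc hS).comp
      (f := fun p : (ℝ × ℝ) × Y => (p.1.1 - p.1.2, F p.1.2 p.2))
      (ContinuousOn.prodMk (by fun_prop) hF') fun p hp => ⟨hts p.1 hp.1, mem_univ _⟩
  obtain ⟨u, hu, hu_unique⟩ := exists_isVolterraSolution_and_eqOn
    (k := fun t s x => S (t - s) (F s x)) hT hg hk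
    fun p hp => (hM (p.1 - p.2) (hts p hp)).comp (hF_lip p.2 (hs p hp))
  exact ⟨u, ⟨hu.continuousOn, hu.eq_add_integral⟩, fun u' hcont heq => hu_unique u' ⟨hcont, heq⟩⟩

end

/-- Existence and uniqueness of a mild solution `u(t) = S(t)u₀ + ∫₀ᵗ S(t−s) F(s, u(s)) ds`
on `[0, T]` for a quasibounded strongly continuous semigroup `S` and a globally Lipschitz
nonlinearity `F`. -/
theorem stmt15 (X : Type*) [NormedAddCommGroup X] [NormedSpace ℝ X] [CompleteSpace X]
    (S : ℝ → (X →L[ℝ] X))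
    (hS0 : S 0 = ContinuousLinearMap.id ℝ X)
    (hSsemi : ∀ t : ℝ, 0 ≤ t → ∀ s : ℝ, 0 ≤ s → S (t + s) = (S t).comp (S s))
    (hScont : ∀ v : X, ContinuousOn (fun t => S t v) (Set.Ici 0))
    (C ω : ℝ) (hC : 0 < C) (hω : 0 < ω)
    (hSbound : ∀ v : X, ∀ t : ℝ, 0 ≤ t → ‖S t v‖ ≤ C * Real.exp (ω * t) * ‖v‖)
    (T : ℝ) (hT : 0 < T) (F : ℝ → X → X)
    (hFcont : ContinuousOn (fun q : ℝ × X => F q.1 q.2) (Set.Icc 0 T ×ˢ Set.univ))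
    (L : ℝ) (hL : 0 < L)
    (hFlip : ∀ t ∈ Set.Icc (0 : ℝ) T, ∀ u v : X, ‖F t u - F t v‖ ≤ L * ‖u - v‖)
    (u₀ : X) :
    ∃ u : ℝ → X,
      (ContinuousOn u (Set.Icc 0 T) ∧
        ∀ t ∈ Set.Icc (0 : ℝ) T,
          u t = S t u₀ + ∫ s in (0 : ℝ)..t, S (t - s) (F s (u s))) ∧
      ∀ u' : ℝ → X, ContinuousOn u' (Set.Icc 0 T) →
        (∀ t ∈ Set.Icc (0 : ℝ) T,
          u' t = S t u₀ + ∫ s in (0 : ℝ)..t, S (t - s) (F s (u' s))) →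
        ∀ t ∈ Set.Icc (0 : ℝ) T, u' t = u t :=
  stmt15_general hT.le (fun x => (hScont x).mono Set.Icc_subset_Ici_self)
    ((hScont u₀).mono Set.Icc_subset_Ici_self) hFcont (L := L.toNNReal)
    fun t ht => .of_dist_le' fun x y => by simpa only [dist_eq_norm] using hFlip t ht x y
end
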